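/- arXiv:0802.3021 — 2 statements merged into one kernel-verified Lean document; each statement's English description precedes it below -/
import Mathlib

section
/- Whitney's Theorem for planar curves: two stable planar curves are regularly homotopic (through immersions) if and only if they have the same Whitney winding number. -/
open Set
open scoped ENNReal

noncomputable section

namespace CurvePaper


/-- The determinant of two vectors in the plane `ℝ² ≅ ℂ`. -/
def det2 (u v : ℂ) : ℝ := u.re * v.im - u.im * v.re

/-- The determinant of three vectors in `ℝ³`. -/
def det3 (a b c : EuclideanSpace ℝ (Fin 3)) : ℝ :=
  a 0 * (b 1 * c 2 - b 2 * c 1) - a 1 * (b 0 * c 2 - b 2 * c 0) + a 2 * (b 0 * c 1 - b 1 * c 0)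

/-- The homomorphism `φ : 𝕏 → ℤ`, `X_{a,b} ↦ a - b`, on the free abelian group `𝕏`
with basis `{X_{a,b} : a b ∈ ℤ}`. -/
def phi : FreeAbelianGroup (ℤ × ℤ) →+ ℤ :=
  FreeAbelianGroup.lift fun p : ℤ × ℤ => p.1 - p.2

/-! ### Planar curves -/

/-- A closed planar curve: a smooth immersion of the circle `ℝ/ℤ` into the plane. -/
structure PlanarCurve : Type where
  toFun : ℝ → ℂ
  periodic : Function.Periodic toFun 1
  smooth : ContDiff ℝ (⊤ : ℕ∞) toFun
  immersion : ∀ t : ℝ, deriv toFun t ≠ 0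

namespace PlanarCurve

/-- The number of parameters in one period mapping to a given point. -/
def multF (f : ℝ → ℂ) (p : ℂ) : ℕ := Set.ncard {t ∈ Set.Ico (0:ℝ) 1 | f t = p}

/-- All self-intersections of `f` at the point `p` are transverse. -/
def TransverseF (f : ℝ → ℂ) (p : ℂ) : Prop :=
  ∀ s ∈ Set.Ico (0:ℝ) 1, ∀ t ∈ Set.Ico (0:ℝ) 1, s ≠ t → f s = p → f t = p →
    det2 (deriv f s) (deriv f t) ≠ 0

/-- The set of self-intersection points of a parametrized curve. -/
def crossingSetF (f : ℝ → ℂ) : Set ℂ := {p : ℂ | 2 ≤ multF f p}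

/-- A parametrized curve is stable if its only self-intersections are finitely many
transverse double points. -/
def StableF (f : ℝ → ℂ) : Prop :=
  (crossingSetF f).Finite ∧ ∀ p : ℂ, multF f p ≤ 2 ∧ (multF f p = 2 → TransverseF f p)

/-- A planar curve is stable if its only self-intersections are transverse double points. -/
def Stable (c : PlanarCurve) : Prop := StableF c.toFun

/-- The number of crossings (self-intersection points) of a planar curve. -/
def crossings (c : PlanarCurve) : ℕ := (crossingSetF c.toFun).ncard

/-- `c` has Whitney winding number `ω`: the degree of the normalized derivative map
`S¹ → S¹`, expressed via a continuous lift of its angle. -/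
def HasWhitney (c : PlanarCurve) (ω : ℤ) : Prop :=
  ∃ θ : ℝ → ℝ, Continuous θ ∧
    (∀ t : ℝ, deriv c.toFun t = (‖deriv c.toFun t‖ : ℂ) * Complex.exp ((θ t : ℂ) * Complex.I)) ∧
    θ 1 - θ 0 = 2 * Real.pi * (ω : ℝ)

/-- `H` is a regular homotopy between parametrized curves `f` and `g`:
a continuously varying family of immersed closed curves. -/
def IsRegHomotopy (f g : ℝ → ℂ) (H : ℝ → ℝ → ℂ) : Prop :=
  (Continuous fun q : ℝ × ℝ => H q.1 q.2) ∧
  (Continuous fun q : ℝ × ℝ => deriv (H q.1) q.2) ∧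
  (∀ s : ℝ, Function.Periodic (H s) 1) ∧
  (∀ s : ℝ, ContDiff ℝ (⊤ : ℕ∞) (H s)) ∧
  (∀ s t : ℝ, deriv (H s) t ≠ 0) ∧
  H 0 = f ∧ H 1 = g

/-- Two planar curves are regularly homotopic. -/
def RegularlyHomotopic (c c' : PlanarCurve) : Prop :=
  ∃ H, IsRegHomotopy c.toFun c'.toFun H

/-- Two planar curves are homotopic through *stable* immersed curves. -/
def StablyHomotopic (c c' : PlanarCurve) : Prop :=
  ∃ H, IsRegHomotopy c.toFun c'.toFun H ∧ ∀ s ∈ Set.Icc (0:ℝ) 1, StableF (H s)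

/-- A point of a curve which is either a regular point or a transverse double point. -/
def StablePointF (f : ℝ → ℂ) (p : ℂ) : Prop :=
  multF f p ≤ 1 ∨ (multF f p = 2 ∧ TransverseF f p)

/-- A curve exhibiting a single `J`-type singularity (a first-order tangency of two
strands), all other points being stable. -/
def JSingF (f : ℝ → ℂ) : Prop :=
  ∃ p : ℂ, multF f p = 2 ∧
    (∀ s ∈ Set.Ico (0:ℝ) 1, ∀ t ∈ Set.Ico (0:ℝ) 1, s ≠ t → f s = p → f t = p →
      ∃ r : ℝ, r ≠ 0 ∧ deriv f t = (r : ℂ) * deriv f s ∧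
        det2 (deriv f s) (iteratedDeriv 2 f s) * ‖deriv f t‖ ^ 3 ≠
          (if 0 < r then 1 else -1) * det2 (deriv f t) (iteratedDeriv 2 f t) * ‖deriv f s‖ ^ 3) ∧
    (∀ q : ℂ, q ≠ p → StablePointF f q) ∧ (crossingSetF f).Finite

/-- A curve exhibiting a single `S`-type singularity (three strands meeting at one point,
pairwise transversally), all other points being stable. -/
def SSingF (f : ℝ → ℂ) : Prop :=
  ∃ p : ℂ, multF f p = 3 ∧ TransverseF f p ∧
    (∀ q : ℂ, q ≠ p → StablePointF f q) ∧ (crossingSetF f).Finite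

/-- A `J` move: a regular homotopy between stable curves passing through exactly one
singular moment, of `J`-type. -/
def JMove (c c' : PlanarCurve) : Prop :=
  c.Stable ∧ c'.Stable ∧ ∃ H, IsRegHomotopy c.toFun c'.toFun H ∧
    ∃ s₀ ∈ Set.Ioo (0:ℝ) 1, (∀ s ∈ Set.Icc (0:ℝ) 1, s ≠ s₀ → StableF (H s)) ∧ JSingF (H s₀)

/-- An `S` move: a regular homotopy between stable curves passing through exactly one
singular moment, of `S`-type. -/
def SMove (c c' : PlanarCurve) : Prop :=
  c.Stable ∧ c'.Stable ∧ ∃ H, IsRegHomotopy c.toFun c'.toFun H ∧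
    ∃ s₀ ∈ Set.Ioo (0:ℝ) 1, (∀ s ∈ Set.Icc (0:ℝ) 1, s ≠ s₀ → StableF (H s)) ∧ SSingF (H s₀)

/-- A basic move is a `J` move or an `S` move. -/
def BasicMove (c c' : PlanarCurve) : Prop := JMove c c' ∨ SMove c c'

/-- An increasing `J` move adds two crossings. -/
def IncreasingJMove (c c' : PlanarCurve) : Prop :=
  JMove c c' ∧ c'.crossings = c.crossings + 2

/-- A decreasing `J` move removes two crossings. -/
def DecreasingJMove (c c' : PlanarCurve) : Prop :=
  JMove c c' ∧ c.crossings = c'.crossings + 2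

/-- A `Z` move: the composite of an increasing `J` move, an `S` move and a decreasing
`J` move (sliding an empty 1-gon past a transverse strand). -/
def ZMove (c c' : PlanarCurve) : Prop :=
  ∃ c₁ c₂, IncreasingJMove c c₁ ∧ SMove c₁ c₂ ∧ DecreasingJMove c₂ c'

/-- A sequence of `k` basic moves leading from `c` to `c'` (allowing an initial
deformation through stable curves). -/
def ChainFromTo (c c' : PlanarCurve) (seq : ℕ → PlanarCurve) (k : ℕ) : Prop :=
  StablyHomotopic c (seq 0) ∧ seq k = c' ∧ ∀ i < k, BasicMove (seq i) (seq (i+1))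

/-- The distance between two curves: the minimal number of basic moves needed to pass
from `c` to `c'` (`⊤` if they are not regularly homotopic). -/
def dist (c c' : PlanarCurve) : ℕ∞ :=
  sInf {m : ℕ∞ | ∃ k : ℕ, m = (k : ℕ∞) ∧ ∃ seq : ℕ → PlanarCurve, ChainFromTo c c' seq k}

/-- The diameter of a set of curves. -/
def diam (A : Set PlanarCurve) : ℕ∞ := ⨆ c ∈ A, ⨆ c' ∈ A, dist c c'

/-- `B^ω_n`: the set of all stable planar curves with Whitney number `ω` and at most
`n` crossings. -/
def B (ω : ℤ) (n : ℕ) : Set PlanarCurve :=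
  {c : PlanarCurve | c.Stable ∧ c.HasWhitney ω ∧ c.crossings ≤ n}

/-- A step of the algorithm: an `S` move, a decreasing `J` move, or a `Z` move whose two
intermediate curves have at most `N` crossings; `w` is the number of basic moves used. -/
def AlgStep (N : ℕ) (c c' : PlanarCurve) (w : ℕ) : Prop :=
  (SMove c c' ∧ w = 1) ∨ (DecreasingJMove c c' ∧ w = 1) ∨
  ((∃ c₁ c₂, IncreasingJMove c c₁ ∧ SMove c₁ c₂ ∧ DecreasingJMove c₂ c' ∧
      c₁.crossings ≤ N ∧ c₂.crossings ≤ N) ∧ w = 3)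

/-! #### The invariant `f^X` -/

/-- The set of parameter pairs (in one period) realizing the double points of a curve. -/
def crossingPairsF (f : ℝ → ℂ) : Set (ℝ × ℝ) :=
  {q : ℝ × ℝ | q.1 ∈ Set.Ico (0:ℝ) 1 ∧ q.2 ∈ Set.Ico (0:ℝ) 1 ∧ q.1 < q.2 ∧ f q.1 = f q.2}

/-- The sign `i(v) ∈ {1,-1}` of a double point visited first at time `s` and then at
time `t`: `1` iff the tangents, in the order visited, form a positive basis. -/
def crossSign (f : ℝ → ℂ) (s t : ℝ) : ℤ :=
  if 0 < det2 (deriv f s) (deriv f t) then 1 else -1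

/-- The index `i(e)` of the subarc `e` of `f` on the parameter interval `(α, β)`:
the sum of the signs of the double points of `e`. -/
def arcIndex (f : ℝ → ℂ) (α β : ℝ) : ℤ :=
  ∑ᶠ q ∈ {q : ℝ × ℝ | q.1 ∈ Set.Ioo α β ∧ q.2 ∈ Set.Ioo α β ∧ q.1 < q.2 ∧ f q.1 = f q.2},
    crossSign f q.1 q.2

/-- The order one invariant `f^X(c) = ∑_v X_{a(v),b(v)} ∈ 𝕏`, where for each double
point `v` the two arcs of `c` based at `v` are ordered by the orientation of the tangents. -/
def fX (c : PlanarCurve) : FreeAbelianGroup (ℤ × ℤ) :=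
  ∑ᶠ q ∈ crossingPairsF c.toFun,
    if 0 < det2 (deriv c.toFun q.1) (deriv c.toFun q.2) then
      FreeAbelianGroup.of (arcIndex c.toFun q.1 q.2, arcIndex c.toFun q.2 (q.1 + 1))
    else
      FreeAbelianGroup.of (arcIndex c.toFun q.2 (q.1 + 1), arcIndex c.toFun q.1 q.2)

/-- The integer valued invariant `g = φ ∘ f^X`. -/
def g (c : PlanarCurve) : ℤ := phi (fX c)

/-! #### The standard curves `δ_ω` -/

/-- An explicit stable curve with winding number `m ≥ 1` and `m - 1` (inward) loops. -/
def deltaFunPos (m : ℕ) : ℝ → ℂ := fun t =>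
  Complex.exp (((2 * Real.pi * (m : ℝ) * t : ℝ) : ℂ) * Complex.I) +
    ((2 * (m : ℝ) / 3 : ℝ) : ℂ) * Complex.exp (((2 * Real.pi * t : ℝ) : ℂ) * Complex.I)

/-- The standard planar curve `δ_ω` with Whitney number `ω` and `||ω|-1|` crossings:
for `ω = 0` a figure eight, and for `ω ≠ 0` a round circle with `|ω| - 1` small loops. -/
def deltaFun (ω : ℤ) : ℝ → ℂ :=
  if ω = 0 then
    fun t => ((Real.sin (2 * Real.pi * t) : ℝ) : ℂ) + ((Real.sin (4 * Real.pi * t) : ℝ) : ℂ) * Complex.I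
  else if 0 < ω then deltaFunPos ω.toNat
  else fun t => (starRingEnd ℂ) (deltaFunPos (-ω).toNat t)

end PlanarCurve


/-! ### Spherical curves -/


/-- A closed spherical curve: a smooth immersion of the circle `ℝ/ℤ` into the unit
sphere `S² ⊆ ℝ³`. -/
structure SphericalCurve : Type where
  toFun : ℝ → EuclideanSpace ℝ (Fin 3)
  norm_one : ∀ t : ℝ, ‖toFun t‖ = 1
  periodic : Function.Periodic toFun 1
  smooth : ContDiff ℝ (⊤ : ℕ∞) toFun
  immersion : ∀ t : ℝ, deriv toFun t ≠ 0

namespace SphericalCurve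

def multF (f : ℝ → EuclideanSpace ℝ (Fin 3)) (p : EuclideanSpace ℝ (Fin 3)) : ℕ :=
  Set.ncard {t ∈ Set.Ico (0:ℝ) 1 | f t = p}

/-- Transversality of the branches at `p`: tangent vectors at `p` are pairwise
independent, detected by the `3×3` determinant with the base point `p` (the outward
normal of the sphere, fixing its orientation). -/
def TransverseF (f : ℝ → EuclideanSpace ℝ (Fin 3)) (p : EuclideanSpace ℝ (Fin 3)) : Prop :=
  ∀ s ∈ Set.Ico (0:ℝ) 1, ∀ t ∈ Set.Ico (0:ℝ) 1, s ≠ t → f s = p → f t = p →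
    det3 p (deriv f s) (deriv f t) ≠ 0

def crossingSetF (f : ℝ → EuclideanSpace ℝ (Fin 3)) : Set (EuclideanSpace ℝ (Fin 3)) :=
  {p | 2 ≤ multF f p}

def StableF (f : ℝ → EuclideanSpace ℝ (Fin 3)) : Prop :=
  (crossingSetF f).Finite ∧ ∀ p, multF f p ≤ 2 ∧ (multF f p = 2 → TransverseF f p)

def Stable (c : SphericalCurve) : Prop := StableF c.toFun

def crossings (c : SphericalCurve) : ℕ := (crossingSetF c.toFun).ncard

/-- The curve as a map into the sphere as a subtype. -/
def pt (c : SphericalCurve) (t : ℝ) : Metric.sphere (0 : EuclideanSpace ℝ (Fin 3)) 1 :=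
  ⟨c.toFun t, mem_sphere_zero_iff_norm.mpr (c.norm_one t)⟩

/-- The planar curve obtained from `c` by deleting the point `v ∈ S²` not on `c`
(stereographic projection from `v`). -/
def proj (c : SphericalCurve) (v : Metric.sphere (0 : EuclideanSpace ℝ (Fin 3)) 1) :
    ℝ → EuclideanSpace ℝ (Fin 2) :=
  haveI : Fact (Module.finrank ℝ (EuclideanSpace ℝ (Fin 3)) = 2 + 1) := ⟨by simp⟩
  fun t => stereographic' 2 v (c.pt t)

/-- `c` has (spherical) Whitney number `ω ∈ ℤ/2`: the parity of the winding number of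
the planar curve obtained by deleting from `S²` a point in the complement of `c`. -/
def HasWhitney (c : SphericalCurve) (ω : ZMod 2) : Prop :=
  ∃ v : Metric.sphere (0 : EuclideanSpace ℝ (Fin 3)) 1,
    (∀ t : ℝ, c.toFun t ≠ (v : EuclideanSpace ℝ (Fin 3))) ∧
    ∃ (m : ℤ) (θ : ℝ → ℝ), Continuous θ ∧
      (∀ t : ℝ, deriv (c.proj v) t =
        ‖deriv (c.proj v) t‖ •
          ((WithLp.equiv 2 (Fin 2 → ℝ)).symm ![Real.cos (θ t), Real.sin (θ t)])) ∧
      θ 1 - θ 0 = 2 * Real.pi * (m : ℝ) ∧ ω = (m : ZMod 2)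

def IsRegHomotopy (f g : ℝ → EuclideanSpace ℝ (Fin 3))
    (H : ℝ → ℝ → EuclideanSpace ℝ (Fin 3)) : Prop :=
  (Continuous fun q : ℝ × ℝ => H q.1 q.2) ∧
  (Continuous fun q : ℝ × ℝ => deriv (H q.1) q.2) ∧
  (∀ s t : ℝ, ‖H s t‖ = 1) ∧
  (∀ s : ℝ, Function.Periodic (H s) 1) ∧
  (∀ s : ℝ, ContDiff ℝ (⊤ : ℕ∞) (H s)) ∧
  (∀ s t : ℝ, deriv (H s) t ≠ 0) ∧
  H 0 = f ∧ H 1 = g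

def RegularlyHomotopic (c c' : SphericalCurve) : Prop :=
  ∃ H, IsRegHomotopy c.toFun c'.toFun H

def StablyHomotopic (c c' : SphericalCurve) : Prop :=
  ∃ H, IsRegHomotopy c.toFun c'.toFun H ∧ ∀ s ∈ Set.Icc (0:ℝ) 1, StableF (H s)

def StablePointF (f : ℝ → EuclideanSpace ℝ (Fin 3)) (p : EuclideanSpace ℝ (Fin 3)) : Prop :=
  multF f p ≤ 1 ∨ (multF f p = 2 ∧ TransverseF f p)

def JSingF (f : ℝ → EuclideanSpace ℝ (Fin 3)) : Prop :=
  ∃ p : EuclideanSpace ℝ (Fin 3), multF f p = 2 ∧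
    (∀ s ∈ Set.Ico (0:ℝ) 1, ∀ t ∈ Set.Ico (0:ℝ) 1, s ≠ t → f s = p → f t = p →
      ∃ r : ℝ, r ≠ 0 ∧ deriv f t = r • deriv f s ∧
        det3 p (deriv f s) (iteratedDeriv 2 f s) * ‖deriv f t‖ ^ 3 ≠
          (if 0 < r then 1 else -1) * det3 p (deriv f t) (iteratedDeriv 2 f t) * ‖deriv f s‖ ^ 3) ∧
    (∀ q, q ≠ p → StablePointF f q) ∧ (crossingSetF f).Finite

def SSingF (f : ℝ → EuclideanSpace ℝ (Fin 3)) : Prop :=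
  ∃ p : EuclideanSpace ℝ (Fin 3), multF f p = 3 ∧ TransverseF f p ∧
    (∀ q, q ≠ p → StablePointF f q) ∧ (crossingSetF f).Finite

def JMove (c c' : SphericalCurve) : Prop :=
  c.Stable ∧ c'.Stable ∧ ∃ H, IsRegHomotopy c.toFun c'.toFun H ∧
    ∃ s₀ ∈ Set.Ioo (0:ℝ) 1, (∀ s ∈ Set.Icc (0:ℝ) 1, s ≠ s₀ → StableF (H s)) ∧ JSingF (H s₀)

def SMove (c c' : SphericalCurve) : Prop :=
  c.Stable ∧ c'.Stable ∧ ∃ H, IsRegHomotopy c.toFun c'.toFun H ∧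
    ∃ s₀ ∈ Set.Ioo (0:ℝ) 1, (∀ s ∈ Set.Icc (0:ℝ) 1, s ≠ s₀ → StableF (H s)) ∧ SSingF (H s₀)

def BasicMove (c c' : SphericalCurve) : Prop := JMove c c' ∨ SMove c c'

def IncreasingJMove (c c' : SphericalCurve) : Prop :=
  JMove c c' ∧ c'.crossings = c.crossings + 2

def DecreasingJMove (c c' : SphericalCurve) : Prop :=
  JMove c c' ∧ c.crossings = c'.crossings + 2

def ZMove (c c' : SphericalCurve) : Prop :=
  ∃ c₁ c₂, IncreasingJMove c c₁ ∧ SMove c₁ c₂ ∧ DecreasingJMove c₂ c'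

def ChainFromTo (c c' : SphericalCurve) (seq : ℕ → SphericalCurve) (k : ℕ) : Prop :=
  StablyHomotopic c (seq 0) ∧ seq k = c' ∧ ∀ i < k, BasicMove (seq i) (seq (i+1))

def dist (c c' : SphericalCurve) : ℕ∞ :=
  sInf {m : ℕ∞ | ∃ k : ℕ, m = (k : ℕ∞) ∧ ∃ seq : ℕ → SphericalCurve, ChainFromTo c c' seq k}

def diam (A : Set SphericalCurve) : ℕ∞ := ⨆ c ∈ A, ⨆ c' ∈ A, dist c c'

def B (ω : ZMod 2) (n : ℕ) : Set SphericalCurve :=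
  {c : SphericalCurve | c.Stable ∧ c.HasWhitney ω ∧ c.crossings ≤ n}

def AlgStep (N : ℕ) (c c' : SphericalCurve) (w : ℕ) : Prop :=
  (SMove c c' ∧ w = 1) ∨ (DecreasingJMove c c' ∧ w = 1) ∨
  ((∃ c₁ c₂, IncreasingJMove c c₁ ∧ SMove c₁ c₂ ∧ DecreasingJMove c₂ c' ∧
      c₁.crossings ≤ N ∧ c₂.crossings ≤ N) ∧ w = 3)

/-! #### The invariant `f^X` for spherical curves -/

def crossingPairsF (f : ℝ → EuclideanSpace ℝ (Fin 3)) : Set (ℝ × ℝ) :=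
  {q : ℝ × ℝ | q.1 ∈ Set.Ico (0:ℝ) 1 ∧ q.2 ∈ Set.Ico (0:ℝ) 1 ∧ q.1 < q.2 ∧ f q.1 = f q.2}

def crossSign (f : ℝ → EuclideanSpace ℝ (Fin 3)) (s t : ℝ) : ℤ :=
  if 0 < det3 (f s) (deriv f s) (deriv f t) then 1 else -1

def arcIndex (f : ℝ → EuclideanSpace ℝ (Fin 3)) (α β : ℝ) : ℤ :=
  ∑ᶠ q ∈ {q : ℝ × ℝ | q.1 ∈ Set.Ioo α β ∧ q.2 ∈ Set.Ioo α β ∧ q.1 < q.2 ∧ f q.1 = f q.2},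
    crossSign f q.1 q.2

def fX (c : SphericalCurve) : FreeAbelianGroup (ℤ × ℤ) :=
  ∑ᶠ q ∈ crossingPairsF c.toFun,
    if 0 < det3 (c.toFun q.1) (deriv c.toFun q.1) (deriv c.toFun q.2) then
      FreeAbelianGroup.of (arcIndex c.toFun q.1 q.2, arcIndex c.toFun q.2 (q.1 + 1))
    else
      FreeAbelianGroup.of (arcIndex c.toFun q.2 (q.1 + 1), arcIndex c.toFun q.1 q.2)

def g (c : SphericalCurve) : ℤ := phi (fX c)

/-- Inverse stereographic projection `ℂ → S²` from the north pole. -/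
def stereoInv (z : ℂ) : EuclideanSpace ℝ (Fin 3) :=
  (WithLp.equiv 2 (Fin 3 → ℝ)).symm
    ![2 * z.re / (Complex.normSq z + 1), 2 * z.im / (Complex.normSq z + 1),
      (Complex.normSq z - 1) / (Complex.normSq z + 1)]

/-- The standard spherical curves `δ_0` (one crossing) and `δ_1` (embedded):
the images in `S²` of the standard planar curves `δ_0`, `δ_1`. -/
def deltaFun (ω : ZMod 2) : ℝ → EuclideanSpace ℝ (Fin 3) :=
  fun t => stereoInv (PlanarCurve.deltaFun (if ω = 0 then 0 else 1) t)

end SphericalCurve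


/-- The determinant of two vectors in `ℝ × ℝ`. -/
def det2P (u v : ℝ × ℝ) : ℝ := u.1 * v.2 - u.2 * v.1

/-- The closed region bounded by a subset of the plane: the set together with all the
bounded connected components of its complement. -/
def closedRegion (S : Set ℂ) : Set ℂ :=
  S ∪ {p : ℂ | p ∉ S ∧ Bornology.IsBounded (connectedComponentIn Sᶜ p)}

theorem int_valued_const {X : Type*} [TopologicalSpace X] [PreconnectedSpace X] (φ : X → ℝ)
    (hφ : Continuous φ) (h : ∀ x, ∃ n : ℤ, φ x = n * (2 * Real.pi)) (x y : X) : φ x = φ y := by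
  have h1 : ∀ x, ∃ n : ℤ, φ x / (2 * Real.pi) = n := by
    intro x
    obtain ⟨n, hn⟩ := h x
    refine ⟨n, ?_⟩
    rw [hn]
    field_simp
  choose N hN using h1
  have hNc : Continuous N := by
    rw [Int.isClosedEmbedding_coe_real.isEmbedding.continuous_iff]
    have : ((fun n : ℤ => (n : ℝ)) ∘ N) = fun x => φ x / (2 * Real.pi) := by
      funext x; simp [hN]
    rw [this]
    fun_prop
  have := PreconnectedSpace.constant ‹_› hNc (x := x) (y := y)
  have h2 : φ x / (2 * Real.pi) = φ y / (2 * Real.pi) := by rw [hN, hN, this]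
  have hpi := Real.pi_pos
  field_simp at h2
  exact h2

theorem exp_eq_int {a b : ℝ} (h : Complex.exp ((a : ℂ) * Complex.I) =
    Complex.exp ((b : ℂ) * Complex.I)) : ∃ n : ℤ, a - b = n * (2 * Real.pi) := by
  obtain ⟨n, hn⟩ := Complex.exp_eq_exp_iff_exists_int.1 h
  refine ⟨n, ?_⟩
  have := congrArg Complex.im hn
  simp at this
  linarith

theorem lift_unique {a b : ℝ → ℝ} (ha : Continuous a) (hb : Continuous b)
    (h : ∀ t, Complex.exp ((a t : ℂ) * Complex.I) = Complex.exp ((b t : ℂ) * Complex.I)) :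
    a 1 - a 0 = b 1 - b 0 := by
  have := int_valued_const (fun t => a t - b t) (by fun_prop) (fun t => exp_eq_int (h t)) 1 0
  linarith

theorem deriv_periodic {f : ℝ → ℂ} (h : Function.Periodic f 1) :
    Function.Periodic (deriv f) 1 := by
  intro t
  rw [← deriv_comp_add_const]
  congr 1
  funext x
  exact h x

theorem forward (c c' : PlanarCurve) (ω ω' : ℤ) (hω : c.HasWhitney ω) (hω' : c'.HasWhitney ω')
    (hr : PlanarCurve.RegularlyHomotopic c c') : ω = ω' := by
  obtain ⟨H, -, hc, hp, -, hne, h0, h1⟩ := hr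
  obtain ⟨θ, hθc, hθ, hθω⟩ := hω
  obtain ⟨θ', hθc', hθ', hθω'⟩ := hω'
  obtain ⟨L, ⟨-, hL⟩, -⟩ := Complex.isCoveringMapOn_exp.existsUnique_continuousMap_lifts
    (A := ℝ × ℝ) (⟨_, hc⟩ : C(ℝ × ℝ, ℂ)) (a₀ := (0, 0))
    (e₀ := Complex.log (deriv (H 0) 0)) (Complex.exp_log (hne 0 0)) (fun q => hne q.1 q.2)
  have hL' : ∀ s t, Complex.exp (L (s, t)) = deriv (H s) t := fun s t => congrFun hL (s, t)
  have key : ∀ s (α : ℝ → ℝ), Continuous α →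
      (∀ t : ℝ, deriv (H s) t = (‖deriv (H s) t‖ : ℂ) * Complex.exp ((α t : ℂ) * Complex.I)) →
      α 1 - α 0 = (L (s, 1)).im - (L (s, 0)).im := by
    intro s α hα h
    refine lift_unique (b := fun t => (L (s, t)).im) hα
      (Complex.continuous_im.comp (L.continuous.comp (by fun_prop))) fun t => ?_
    have e1 := h t
    rw [← hL' s t, Complex.norm_exp] at e1
    have e2 : Complex.exp (L (s, t)) = (Real.exp (L (s, t)).re : ℂ) *
        Complex.exp (((L (s, t)).im : ℂ) * Complex.I) := by
      rw [Complex.ofReal_exp, ← Complex.exp_add, Complex.re_add_im]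
    rw [e2] at e1
    exact (mul_left_cancel₀ (by simp) e1).symm
  have hconst := int_valued_const (fun s : ℝ => (L (s, 1)).im - (L (s, 0)).im)
    (by
      have a1 : Continuous fun s : ℝ => L (s, 1) := L.continuous.comp (by fun_prop)
      have a2 : Continuous fun s : ℝ => L (s, 0) := L.continuous.comp (by fun_prop)
      exact (Complex.continuous_im.comp a1).sub (Complex.continuous_im.comp a2))
    (fun s => by
      have := deriv_periodic (hp s) 0
      rw [zero_add, ← hL', ← hL'] at this
      obtain ⟨n, hn⟩ := Complex.exp_eq_exp_iff_exists_int.1 this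
      refine ⟨n, ?_⟩
      rw [hn]
      simp) 0 1
  have k0 := key 0 θ hθc (by rw [h0]; exact hθ)
  have k1 := key 1 θ' hθc' (by rw [h1]; exact hθ')
  rw [← k0, ← k1, hθω, hθω'] at hconst
  have hpi := Real.pi_pos
  have : (ω : ℝ) = ω' := by
    have := mul_left_cancel₀ (by positivity) hconst
    exact this
  exact_mod_cast this

theorem smooth_lift {v : ℝ → ℂ} (hv : ContDiff ℝ (⊤ : ℕ∞) v) (hne : ∀ t, v t ≠ 0)
    {θ : ℝ → ℝ} (hθ : Continuous θ)
    (h : ∀ t : ℝ, v t = (‖v t‖ : ℂ) * Complex.exp ((θ t : ℂ) * Complex.I)) :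
    ContDiff ℝ (⊤ : ℕ∞) θ := by
  rw [contDiff_iff_contDiffAt]
  intro t₀
  have hw : ∀ t, v t * Complex.exp (-(θ t₀ : ℂ) * Complex.I) =
      (‖v t‖ : ℂ) * Complex.exp (((θ t - θ t₀ : ℝ) : ℂ) * Complex.I) := by
    intro t
    conv_lhs => rw [h t]
    rw [mul_assoc, ← Complex.exp_add]
    push_cast
    ring_nf
  have h1 : ContDiffAt ℝ (⊤ : ℕ∞)
      (fun t => θ t₀ + (Complex.log (v t * Complex.exp (-(θ t₀ : ℂ) * Complex.I))).im) t₀ := by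
    refine contDiffAt_const.add ?_
    refine (Complex.imCLM.contDiff (n := (⊤ : ℕ∞))).contDiffAt.comp (x := t₀)
      (f := fun t => Complex.log (v t * Complex.exp (-(θ t₀ : ℂ) * Complex.I))) ?_
    have hs : v t₀ * Complex.exp (-(θ t₀ : ℂ) * Complex.I) ∈ Complex.slitPlane := by
      rw [hw]
      simp [hne]
    have := (Complex.contDiffAt_log (n := (⊤ : ℕ∞)) hs).restrict_scalars ℝ
    exact this.comp t₀ (hv.contDiffAt.mul contDiffAt_const)
  refine h1.congr_of_eventuallyEq ?_
  have hcont : Filter.Tendsto (fun t => θ t - θ t₀) (nhds t₀) (nhds 0) := by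
    have : Continuous fun t => θ t - θ t₀ := by fun_prop
    simpa using this.tendsto t₀
  have hev := hcont.eventually (Ioo_mem_nhds (neg_lt_zero.2 Real.pi_pos) Real.pi_pos)
  filter_upwards [hev] with t ht
  rw [hw, Complex.log_im, Complex.arg_real_mul _ (norm_pos_iff.2 (hne t)),
    Complex.arg_exp_mul_I, (toIocMod_eq_self _).2]
  · ring
  · exact ⟨ht.1, by linarith [ht.2]⟩

theorem exists_lift (c : PlanarCurve) (ω : ℤ) (hω : c.HasWhitney ω) :
    ∃ A θ : ℝ → ℝ, ContDiff ℝ (⊤ : ℕ∞) A ∧ ContDiff ℝ (⊤ : ℕ∞) θ ∧ (∀ t, A (t + 1) = A t) ∧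
      (∀ t, θ (t + 1) = θ t + 2 * Real.pi * ω) ∧
      (∀ t, deriv c.toFun t = (Real.exp (A t) : ℂ) * Complex.exp ((θ t : ℂ) * Complex.I)) ∧
      (∃ t ∈ Icc (0 : ℝ) 1, θ t ≠ θ 0) := by
  obtain ⟨θ, hθc, hθ, hθω⟩ := hω
  have hv : ContDiff ℝ (⊤ : ℕ∞) (deriv c.toFun) := (contDiff_infty_iff_deriv.1 c.smooth).2
  have hper := deriv_periodic c.periodic
  have hA : ContDiff ℝ (⊤ : ℕ∞) fun t => Real.log ‖deriv c.toFun t‖ :=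
    (hv.norm ℝ c.immersion).log fun t => norm_ne_zero_iff.2 (c.immersion t)
  have hexp : ∀ t, Real.exp (Real.log ‖deriv c.toFun t‖) = ‖deriv c.toFun t‖ := fun t =>
    Real.exp_log (norm_pos_iff.2 (c.immersion t))
  refine ⟨fun t => Real.log ‖deriv c.toFun t‖, θ, hA, smooth_lift hv c.immersion hθc hθ,
    fun t => by simp only [hper t], ?_, fun t => by rw [hexp, ← hθ], ?_⟩
  · intro t
    have := int_valued_const (fun t => θ (t + 1) - θ t) (by fun_prop) (fun t => exp_eq_int (by
      have h1 := hθ (t + 1)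
      rw [hper t] at h1
      conv_lhs at h1 => rw [hθ t]
      exact (mul_left_cancel₀ (by simp [c.immersion]) h1).symm)) t 0
    simp only [zero_add] at this
    linarith
  · by_contra! hcon
    have h1 : ∫ t in (0 : ℝ)..1, deriv c.toFun t = c.toFun 1 - c.toFun 0 :=
      intervalIntegral.integral_deriv_eq_sub
        (fun t _ => (c.smooth.differentiable (by simp)).differentiableAt)
        (hv.continuous.intervalIntegrable _ _)
    have h2 : ∫ t in (0 : ℝ)..1, deriv c.toFun t =
        ∫ t in (0 : ℝ)..1, (‖deriv c.toFun t‖ : ℂ) * Complex.exp ((θ 0 : ℂ) * Complex.I) := by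
      refine intervalIntegral.integral_congr fun t ht => ?_
      rw [uIcc_of_le zero_le_one] at ht
      rw [← hcon t ht]
      exact hθ t
    have h3 := c.periodic 0
    rw [zero_add] at h3
    rw [h1, h3, sub_self, intervalIntegral.integral_mul_const, intervalIntegral.integral_ofReal] at h2
    have h4 : 0 < ∫ t in (0 : ℝ)..1, ‖deriv c.toFun t‖ :=
      intervalIntegral.intervalIntegral_pos_of_pos (hv.continuous.norm.intervalIntegrable _ _)
        (fun t => norm_pos_iff.2 (c.immersion t)) one_pos
    have h5 := h2.symm
    simp only [mul_eq_zero, Complex.exp_ne_zero, or_false] at h5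
    exact h4.ne' (by exact_mod_cast h5)

theorem mean_lt {A θ : ℝ → ℝ} (hA : Continuous A) (hθ : Continuous θ)
    (hn : ∃ t ∈ Icc (0 : ℝ) 1, θ t ≠ θ 0) :
    ‖∫ t in (0 : ℝ)..1, (Real.exp (A t) : ℂ) * Complex.exp ((θ t : ℂ) * Complex.I)‖ <
      ∫ t in (0 : ℝ)..1, Real.exp (A t) := by
  set Z := ∫ t in (0 : ℝ)..1, (Real.exp (A t) : ℂ) * Complex.exp ((θ t : ℂ) * Complex.I) with hZ
  set α := Complex.arg Z
  have hre : ‖Z‖ = ∫ t in (0 : ℝ)..1, Real.exp (A t) * Real.cos (θ t - α) := by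
    have e1 : ((‖Z‖ : ℝ) : ℂ) = Z * Complex.exp (((-α : ℝ) : ℂ) * Complex.I) := by
      conv_rhs => rw [← Complex.norm_mul_exp_arg_mul_I Z]
      rw [mul_assoc, ← Complex.exp_add]
      simp [α]
    rw [hZ, ← intervalIntegral.integral_mul_const] at e1
    have e2 := congrArg Complex.reCLM e1
    rw [← ContinuousLinearMap.intervalIntegral_comp_comm] at e2
    · simp only [Complex.reCLM_apply, Complex.ofReal_re] at e2
      rw [← hZ] at e2
      rw [e2]
      refine intervalIntegral.integral_congr fun t _ => ?_
      rw [mul_assoc, ← Complex.exp_add, Complex.re_ofReal_mul, ← add_mul, ← Complex.ofReal_add,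
        Complex.exp_ofReal_mul_I_re, sub_eq_add_neg]
    · apply Continuous.intervalIntegrable
      fun_prop
  rw [hre]
  refine intervalIntegral.integral_lt_integral_of_continuousOn_of_le_of_exists_lt one_pos
    (by fun_prop) (by fun_prop) (fun t _ => ?_) ?_
  · nlinarith [Real.exp_pos (A t), Real.cos_le_one (θ t - α)]
  · by_contra! hcon
    have h1 : ∀ t ∈ Icc (0 : ℝ) 1, Real.cos (θ t - α) = 1 := fun t ht => by
      have := hcon t ht
      have h2 := Real.exp_pos (A t)
      refine le_antisymm (Real.cos_le_one _) ?_
      by_contra! h3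
      nlinarith
    have h2 := int_valued_const (X := Icc (0 : ℝ) 1) (fun t => θ t - α) (by fun_prop) (fun t => by
      obtain ⟨n, hn⟩ := (Real.cos_eq_one_iff _).1 (h1 t t.2)
      exact ⟨n, hn.symm⟩)
    obtain ⟨t, ht, hne⟩ := hn
    have h3 := h2 ⟨t, ht⟩ ⟨0, by simp⟩
    simp only at h3
    exact hne (by linarith)

theorem construct (A θ : ℝ → ℝ → ℝ) (ω : ℤ) (B : ℝ → ℂ) (hB : Continuous B)
    (hA : Continuous fun q : ℝ × ℝ => A q.1 q.2) (hθ : Continuous fun q : ℝ × ℝ => θ q.1 q.2)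
    (hAs : ∀ s, ContDiff ℝ (⊤ : ℕ∞) (A s)) (hθs : ∀ s, ContDiff ℝ (⊤ : ℕ∞) (θ s))
    (hAp : ∀ s t, A s (t + 1) = A s t) (hθp : ∀ s t, θ s (t + 1) = θ s t + 2 * Real.pi * ω)
    (hn : ∀ s, ∃ t ∈ Icc (0 : ℝ) 1, θ s t ≠ θ s 0) :
    ∃ H : ℝ → ℝ → ℂ, (Continuous fun q : ℝ × ℝ => H q.1 q.2) ∧
      (Continuous fun q : ℝ × ℝ => deriv (H q.1) q.2) ∧
      (∀ s : ℝ, Function.Periodic (H s) 1) ∧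
      (∀ s : ℝ, ContDiff ℝ (⊤ : ℕ∞) (H s)) ∧
      (∀ s t : ℝ, deriv (H s) t ≠ 0) ∧
      (∀ (s : ℝ) (c : PlanarCurve), c.toFun 0 = B s → (∀ t, deriv c.toFun t =
        (Real.exp (A s t) : ℂ) * Complex.exp ((θ s t : ℂ) * Complex.I)) → H s = c.toFun) := by
  let u : ℝ → ℝ → ℂ := fun s t => (Real.exp (A s t) : ℂ) * Complex.exp ((θ s t : ℂ) * Complex.I)
  let m : ℝ → ℝ := fun s => ∫ t in (0 : ℝ)..1, Real.exp (A s t)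
  let U : ℝ → ℂ := fun s => ∫ t in (0 : ℝ)..1, u s t
  let v : ℝ → ℝ → ℂ := fun s t => u s t - U s / (m s : ℂ) * (Real.exp (A s t) : ℂ)
  have hu : Continuous fun q : ℝ × ℝ => u q.1 q.2 := by
    simp only [u]; fun_prop
  have hU : Continuous U :=
    intervalIntegral.continuous_parametric_intervalIntegral_of_continuous' (f := u) hu 0 1
  have hm : Continuous m :=
    intervalIntegral.continuous_parametric_intervalIntegral_of_continuous'
      (f := fun s t => Real.exp (A s t)) (Real.continuous_exp.comp hA) 0 1
  have hlt : ∀ s, ‖U s‖ < m s := fun s =>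
    mean_lt (hAs s).continuous (hθs s).continuous (hn s)
  have hmpos : ∀ s, 0 < m s := fun s => (norm_nonneg _).trans_lt (hlt s)
  have hm0 : ∀ s, (m s : ℂ) ≠ 0 := fun s => by exact_mod_cast (hmpos s).ne'
  have hUm : Continuous fun s => U s / (m s : ℂ) :=
    hU.div (Complex.continuous_ofReal.comp hm) hm0
  have hv : Continuous fun q : ℝ × ℝ => v q.1 q.2 :=
    hu.sub ((hUm.comp continuous_fst).mul
      (Complex.continuous_ofReal.comp (Real.continuous_exp.comp hA)))
  have hus : ∀ s, ContDiff ℝ (⊤ : ℕ∞) (u s) := fun s =>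
    (Complex.ofRealCLM.contDiff.comp (hAs s).exp).mul
      (((Complex.ofRealCLM.contDiff.comp (hθs s)).mul contDiff_const).cexp)
  have hvs : ∀ s, ContDiff ℝ (⊤ : ℕ∞) (v s) := fun s =>
    (hus s).sub (contDiff_const.mul (Complex.ofRealCLM.contDiff.comp (hAs s).exp))
  have hup : ∀ s, Function.Periodic (u s) 1 := fun s t => by
    simp only [u]
    rw [hAp, hθp]
    congr 1
    rw [Complex.exp_eq_exp_iff_exists_int]
    refine ⟨ω, ?_⟩
    push_cast
    ring
  have hvp : ∀ s, Function.Periodic (v s) 1 := fun s t => by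
    simp only [v]
    rw [hup s t, hAp]
  have hv0 : ∀ s t, v s t ≠ 0 := fun s t h => by
    have h1 := sub_eq_zero.1 h
    have h2 := congrArg norm h1
    simp only [u, norm_mul, Complex.norm_exp_ofReal_mul_I, norm_div, Complex.norm_real, mul_one,
      Real.norm_eq_abs, abs_of_pos (hmpos s), abs_of_pos (Real.exp_pos _)] at h2
    have h3 : ‖U s‖ / m s < 1 := (div_lt_one (hmpos s)).2 (hlt s)
    nlinarith [Real.exp_pos (A s t)]
  have hvint : ∀ s, ∫ t in (0 : ℝ)..1, v s t = 0 := fun s => by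
    simp only [v]
    rw [intervalIntegral.integral_sub ((hus s).continuous.intervalIntegrable _ _),
      intervalIntegral.integral_const_mul, intervalIntegral.integral_ofReal]
    · change U s - U s / (m s : ℂ) * (m s : ℂ) = 0
      rw [div_mul_cancel₀ _ (hm0 s), sub_self]
    · apply Continuous.intervalIntegrable
      have := (hAs s).continuous
      fun_prop
  let H : ℝ → ℝ → ℂ := fun s t => B s + ∫ τ in (0 : ℝ)..t, v s τ
  have hHd : ∀ s t, HasDerivAt (H s) (v s t) t := fun s t =>
    (intervalIntegral.integral_hasDerivAt_right ((hvs s).continuous.intervalIntegrable _ _)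
      ((hvs s).continuous.stronglyMeasurableAtFilter _ _) (hvs s).continuous.continuousAt).const_add _
  have hHd' : ∀ s, deriv (H s) = v s := fun s => funext fun t => (hHd s t).deriv
  refine ⟨H, ?_, ?_, ?_, ?_, ?_, ?_⟩
  · refine (hB.comp continuous_fst).add ?_
    exact intervalIntegral.continuous_parametric_intervalIntegral_of_continuous
      (f := fun q : ℝ × ℝ => v q.1) (by
        exact hv.comp (by fun_prop : Continuous fun p : (ℝ × ℝ) × ℝ => (p.1.1, p.2)))
      continuous_snd
  · simp only [hHd']
    exact hv
  · intro s t
    simp only [H]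
    have h1 : ∫ τ in t..(t + 1), v s τ = 0 := by
      rw [(hvp s).intervalIntegral_add_eq t 0, zero_add, hvint]
    rw [← intervalIntegral.integral_add_adjacent_intervals (b := t)
      ((hvs s).continuous.intervalIntegrable _ _) ((hvs s).continuous.intervalIntegrable _ _),
      h1, add_zero]
  · intro s
    rw [contDiff_infty_iff_deriv, hHd']
    exact ⟨fun t => (hHd s t).differentiableAt, hvs s⟩
  · intro s t
    rw [hHd']
    exact hv0 s t
  · intro s c h0 hc
    have hcu : deriv c.toFun = u s := funext hc
    have hint : ∀ t, ∫ τ in (0 : ℝ)..t, u s τ = c.toFun t - c.toFun 0 := fun t => by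
      rw [← hcu]
      exact intervalIntegral.integral_deriv_eq_sub
        (fun t _ => (c.smooth.differentiable (by simp)).differentiableAt)
        ((hcu ▸ (hus s).continuous).intervalIntegrable _ _)
    have hU0 : U s = 0 := by
      have h3 := c.periodic 0
      rw [zero_add] at h3
      simp only [U]
      rw [hint, h3, sub_self]
    have hvu : v s = u s := by
      funext t
      simp only [v, hU0]
      simp
    funext t
    simp only [H]
    rw [hvu, hint, h0]
    ring

theorem exists_path (θ₀ θ₁ : ℝ → ℝ) (ω : ℤ) (h0 : ContDiff ℝ (⊤ : ℕ∞) θ₀)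
    (p0 : ∀ t, θ₀ (t + 1) = θ₀ t + 2 * Real.pi * ω)
    (p1 : ∀ t, θ₁ (t + 1) = θ₁ t + 2 * Real.pi * ω)
    (n0 : ∃ t ∈ Icc (0 : ℝ) 1, θ₀ t ≠ θ₀ 0) (n1 : ∃ t ∈ Icc (0 : ℝ) 1, θ₁ t ≠ θ₁ 0) :
    ∃ χ : ℝ → ℝ, ContDiff ℝ (⊤ : ℕ∞) χ ∧ (∀ t, χ (t + 1) = χ t) ∧
      ∀ s ∈ Icc (0 : ℝ) 1, ∃ t ∈ Icc (0 : ℝ) 1,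
        (1 - s) * θ₀ t + s * θ₁ t + s * (1 - s) * χ t ≠
        (1 - s) * θ₀ 0 + s * θ₁ 0 + s * (1 - s) * χ 0 := by
  by_cases hlin : ∀ s ∈ Icc (0 : ℝ) 1, ∃ t ∈ Icc (0 : ℝ) 1,
        (1 - s) * θ₀ t + s * θ₁ t ≠ (1 - s) * θ₀ 0 + s * θ₁ 0
  · exact ⟨fun _ => 0, contDiff_const, fun _ => rfl, by simpa using hlin⟩
  push Not at hlin
  obtain ⟨r, hr, hrc⟩ := hlin
  have hω : 2 * Real.pi * (ω : ℝ) = 0 := by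
    have := hrc 1 (by simp)
    have a := p0 0
    have b := p1 0
    rw [zero_add] at a b
    rw [a, b] at this
    linarith
  have hr0 : r ≠ 0 := by
    rintro rfl
    obtain ⟨t, ht, h⟩ := n0
    exact h (by simpa using hrc t ht)
  refine ⟨fun t => θ₀ t ^ 2, h0.pow 2, fun t => by simp only [p0, hω, add_zero], ?_⟩
  intro s hs
  by_contra! hcon
  obtain ⟨a, ha, hne⟩ := n0
  by_cases hs0 : s = 0
  · subst hs0
    exact hne (by simpa using hcon a ha)
  by_cases hs1 : s = 1
  · subst hs1
    obtain ⟨t, ht, h⟩ := n1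
    exact h (by simpa using hcon t ht)
  obtain ⟨b, hb, hbm⟩ : ∃ b ∈ Icc (0 : ℝ) 1, θ₀ b = (θ₀ 0 + θ₀ a) / 2 := by
    have h1 := intermediate_value_uIcc (a := 0) (b := a) (f := θ₀) h0.continuous.continuousOn
    have h2 : (θ₀ 0 + θ₀ a) / 2 ∈ uIcc (θ₀ 0) (θ₀ a) := by
      rcases le_total (θ₀ 0) (θ₀ a) with h | h
      · rw [uIcc_of_le h]; constructor <;> linarith
      · rw [uIcc_of_ge h]; constructor <;> linarith
    obtain ⟨b, hb, hbe⟩ := h1 h2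
    rw [uIcc_of_le ha.1] at hb
    exact ⟨b, ⟨hb.1, hb.2.trans ha.2⟩, hbe⟩
  have ca := hcon a ha
  have cb := hcon b hb
  have la := hrc a ha
  have lb := hrc b hb
  rw [hbm] at cb lb
  have e1 : θ₁ b - θ₁ 0 = (θ₁ a - θ₁ 0) / 2 := by
    apply mul_left_cancel₀ hr0
    linarith
  have e2 : s * (1 - s) * (θ₀ a - θ₀ 0) ^ 2 = 0 := by
    have e3 : θ₁ b = θ₁ 0 + (θ₁ a - θ₁ 0) / 2 := by linarith
    rw [e3] at cb
    linear_combination 2 * ca - 4 * cb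
  have e4 : s * (1 - s) ≠ 0 := mul_ne_zero hs0 (sub_ne_zero.2 (Ne.symm hs1))
  have e5 : (θ₀ a - θ₀ 0) ^ 2 ≠ 0 := pow_ne_zero _ (sub_ne_zero.2 hne)
  exact mul_ne_zero e4 e5 e2

theorem backward (c c' : PlanarCurve) (ω : ℤ) (hω : c.HasWhitney ω) (hω' : c'.HasWhitney ω) :
    PlanarCurve.RegularlyHomotopic c c' := by
  obtain ⟨A₀, θ₀, hA0, h0, pA0, p0, d0, n0⟩ := exists_lift c ω hω
  obtain ⟨A₁, θ₁, hA1, h1, pA1, p1, d1, n1⟩ := exists_lift c' ω hω'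
  obtain ⟨χ, hχ, pχ, hpath⟩ := exists_path θ₀ θ₁ ω h0 p0 p1 n0 n1
  let σ : ℝ → ℝ := fun s => max 0 (min s 1)
  have hσ : Continuous σ := by simp only [σ]; fun_prop
  have hσI : ∀ s, σ s ∈ Icc (0 : ℝ) 1 := fun s =>
    ⟨le_max_left _ _, max_le zero_le_one (min_le_right _ _)⟩
  have σ0 : σ 0 = 0 := by simp [σ]
  have σ1 : σ 1 = 1 := by simp [σ]
  have cA0 := hA0.continuous
  have cA1 := hA1.continuous
  have c0 := h0.continuous
  have c1 := h1.continuous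
  have cχ := hχ.continuous
  obtain ⟨H, q1, q2, q3, q4, q5, q6⟩ := construct
    (fun s t => (1 - σ s) * A₀ t + σ s * A₁ t)
    (fun s t => (1 - σ s) * θ₀ t + σ s * θ₁ t + σ s * (1 - σ s) * χ t) ω
    (fun s => (1 - σ s : ℝ) * c.toFun 0 + (σ s : ℝ) * c'.toFun 0)
    (by fun_prop) (by fun_prop) (by fun_prop) (fun s => by fun_prop) (fun s => by fun_prop)
    (fun s t => by simp only [pA0, pA1])
    (fun s t => by simp only [p0, p1, pχ]; ring)
    (fun s => hpath (σ s) (hσI s))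
  refine ⟨H, q1, q2, q3, q4, q5, q6 0 c ?_ ?_, q6 1 c' ?_ ?_⟩
  · simp [σ0]
  · simpa [σ0] using d0
  · simp [σ1]
  · simpa [σ1] using d1

/-- Whitney's theorem, planar case. Two stable planar curves are
regularly homotopic if and only if they have the same Whitney winding number. -/
theorem statement7 (c c' : PlanarCurve) (hc : c.Stable) (hc' : c'.Stable)
    (ω ω' : ℤ) (hω : c.HasWhitney ω) (hω' : c'.HasWhitney ω') :
    PlanarCurve.RegularlyHomotopic c c' ↔ ω = ω' := by
  refine ⟨forward c c' ω ω' hω hω', ?_⟩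
  rintro rfl
  exact backward c c' ω hω hω'

end CurvePaper
end
end

section
/- Whitney's Theorem for spherical curves: two stable spherical curves are regularly homotopic (through immersions) if and only if they have the same Whitney number in {0,1}. -/
open Set
open scoped ENNReal

noncomputable section

namespace CurvePaper


abbrev E3 := EuclideanSpace ℝ (Fin 3)

def SR (f g : ℝ → E3) : Prop := ∃ H, SphericalCurve.IsRegHomotopy f g H

theorem SR.mk (H : ℝ → ℝ → E3) (hc : Continuous fun q : ℝ × ℝ => H q.1 q.2)
    (hd : Continuous fun q : ℝ × ℝ => deriv (H q.1) q.2)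
    (hn : ∀ s t : ℝ, ‖H s t‖ = 1)
    (hp : ∀ s : ℝ, Function.Periodic (H s) 1)
    (hs : ∀ s : ℝ, ContDiff ℝ (⊤ : ℕ∞) (H s))
    (hi : ∀ s ∈ Icc (0:ℝ) 1, ∀ t : ℝ, deriv (H s) t ≠ 0) : SR (H 0) (H 1) := by
  refine ⟨fun s t => H (max 0 (min 1 s)) t, ?_, ?_, fun s t => hn _ _, fun s => hp _,
    fun s => hs _, fun s t => hi _ ⟨?_, ?_⟩ t, ?_, ?_⟩
  · exact hc.comp (by fun_prop : Continuous fun q : ℝ × ℝ => (max 0 (min 1 q.1), q.2))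
  · exact hd.comp (by fun_prop : Continuous fun q : ℝ × ℝ => (max 0 (min 1 q.1), q.2))
  · simp
  · simp
  · simp
  · simp

theorem SR.symm {f g : ℝ → E3} (h : SR f g) : SR g f := by
  obtain ⟨H, hc, hd, hn, hp, hs, hi, h0, h1⟩ := h
  have := SR.mk (fun s t => H (1 - s) t)
    (hc.comp (by fun_prop : Continuous fun q : ℝ × ℝ => (1 - q.1, q.2)))
    (hd.comp (by fun_prop : Continuous fun q : ℝ × ℝ => (1 - q.1, q.2)))
    (fun s t => hn _ _) (fun s => hp _) (fun s => hs _) (fun s _ t => hi _ t)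
  simpa [h0, h1] using this

theorem SR.trans {f g k : ℝ → E3} (h : SR f g) (h' : SR g k) : SR f k := by
  obtain ⟨H, hc, hd, hn, hp, hs, hi, h0, h1⟩ := h
  obtain ⟨H', hc', hd', hn', hp', hs', hi', h0', h1'⟩ := h'
  have e1 : Continuous fun q : ℝ × ℝ => (2 * q.1, q.2) := by fun_prop
  have e2 : Continuous fun q : ℝ × ℝ => (2 * q.1 - 1, q.2) := by fun_prop
  have key : ∀ s : ℝ, s = 1/2 → H (2 * s) = H' (2 * s - 1) := by
    rintro s rfl
    norm_num [h1, h0']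
  let K : ℝ → ℝ → E3 := fun s => if s ≤ 1/2 then H (2 * s) else H' (2 * s - 1)
  refine ⟨K, ?_, ?_, ?_, ?_, ?_, ?_, ?_, ?_⟩
  · have : (fun q : ℝ × ℝ => K q.1 q.2) =
      fun q : ℝ × ℝ => if q.1 ≤ 1/2 then H (2 * q.1) q.2 else H' (2 * q.1 - 1) q.2 := by
      funext q; simp only [K]; split_ifs <;> rfl
    rw [this]
    refine Continuous.if_le (hc.comp e1) (hc'.comp e2) continuous_fst continuous_const ?_
    intro q hq
    simp [key _ hq]
  · have : (fun q : ℝ × ℝ => deriv (K q.1) q.2) =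
      fun q : ℝ × ℝ => if q.1 ≤ 1/2 then deriv (H (2 * q.1)) q.2
        else deriv (H' (2 * q.1 - 1)) q.2 := by
      funext q; simp only [K]; split_ifs <;> rfl
    rw [this]
    refine Continuous.if_le (hd.comp e1) (hd'.comp e2) continuous_fst continuous_const ?_
    intro q hq
    simp [key _ hq]
  · intro s t; simp only [K]; split_ifs <;> simp [hn, hn']
  · intro s; simp only [K]; split_ifs; exacts [hp _, hp' _]
  · intro s; simp only [K]; split_ifs; exacts [hs _, hs' _]
  · intro s t; simp only [K]; split_ifs; exacts [hi _ _, hi' _ _]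
  · simp [K, h0]
  · norm_num [K, h1']

open SphericalCurve in
theorem stereoInv_apply (z : ℂ) : (stereoInv z 0 = 2 * z.re / (Complex.normSq z + 1)) ∧
    (stereoInv z 1 = 2 * z.im / (Complex.normSq z + 1)) ∧
    (stereoInv z 2 = (Complex.normSq z - 1) / (Complex.normSq z + 1)) := by
  simp [stereoInv]

theorem nsq_pos (z : ℂ) : 0 < Complex.normSq z + 1 := by
  have := Complex.normSq_nonneg z
  linarith

open SphericalCurve in
theorem norm_stereoInv (z : ℂ) : ‖stereoInv z‖ = 1 := by
  have h := nsq_pos z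
  have : ‖stereoInv z‖ ^ 2 = 1 := by
    rw [EuclideanSpace.norm_sq_eq, Fin.sum_univ_three]
    obtain ⟨h0, h1, h2⟩ := stereoInv_apply z
    rw [h0, h1, h2]
    simp only [Real.norm_eq_abs, sq_abs]
    rw [Complex.normSq_apply] at *
    field_simp
    ring
  nlinarith [norm_nonneg (stereoInv z)]

theorem contDiff_congr_aux {f g : ℂ → ℝ} (hf : ContDiff ℝ (⊤ : ℕ∞) f) (h : ∀ z, g z = f z) :
    ContDiff ℝ (⊤ : ℕ∞) g := by
  have : g = f := funext h
  rwa [this]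

open SphericalCurve in
theorem contDiff_stereoInv : ContDiff ℝ (⊤ : ℕ∞) stereoInv := by
  have hre : ContDiff ℝ (⊤ : ℕ∞) (fun z : ℂ => z.re) := Complex.reCLM.contDiff
  have him : ContDiff ℝ (⊤ : ℕ∞) (fun z : ℂ => z.im) := Complex.imCLM.contDiff
  have hn : ContDiff ℝ (⊤ : ℕ∞) (fun z : ℂ => Complex.normSq z) := by
    simp only [Complex.normSq_apply]
    exact (hre.mul hre).add (him.mul him)
  rw [contDiff_euclidean]
  intro i
  have hne : ∀ z : ℂ, Complex.normSq z + 1 ≠ 0 := fun z => (nsq_pos z).ne'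
  fin_cases i
  · exact contDiff_congr_aux (((contDiff_const (c := (2:ℝ))).mul hre).div (hn.add contDiff_const) hne)
      (fun z => (stereoInv_apply z).1)
  · exact contDiff_congr_aux (((contDiff_const (c := (2:ℝ))).mul him).div (hn.add contDiff_const) hne)
      (fun z => (stereoInv_apply z).2.1)
  · exact contDiff_congr_aux ((hn.sub contDiff_const).div (hn.add contDiff_const) hne)
      (fun z => (stereoInv_apply z).2.2)

open SphericalCurve in
theorem stereo_left (z : ℂ) : z = (((stereoInv z 0 : ℝ) : ℂ) + ((stereoInv z 1 : ℝ) : ℂ) * Complex.I)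
    / ((1 - stereoInv z 2 : ℝ) : ℂ) := by
  obtain ⟨h0, h1, h2⟩ := stereoInv_apply z
  have h := nsq_pos z
  have h3 : 1 - stereoInv z 2 = 2 / (Complex.normSq z + 1) := by
    rw [h2]; field_simp; ring
  have hne : ((1 - stereoInv z 2 : ℝ) : ℂ) ≠ 0 := by
    rw [h3]; exact Complex.ofReal_ne_zero.2 (by positivity)
  rw [eq_div_iff hne, h3, h0, h1]
  apply Complex.ext
  · simp only [Complex.mul_re, Complex.add_re, Complex.ofReal_re, Complex.ofReal_im, Complex.I_re,
      Complex.I_im]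
    ring
  · simp only [Complex.mul_im, Complex.add_im, Complex.ofReal_re, Complex.ofReal_im, Complex.I_re,
      Complex.I_im]
    ring

open SphericalCurve in
theorem one_sub_ne (z : ℂ) : 1 - stereoInv z 2 ≠ 0 := by
  obtain ⟨h0, h1, h2⟩ := stereoInv_apply z
  have h := nsq_pos z
  have h3 : 1 - stereoInv z 2 = 2 / (Complex.normSq z + 1) := by
    rw [h2]; field_simp; ring
  rw [h3]; positivity

theorem hasDerivAt_coord {f : ℝ → E3} {f' : E3} {t : ℝ} (h : HasDerivAt f f' t) (i : Fin 3) :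
    HasDerivAt (fun x => f x i) (f' i) t :=
  (EuclideanSpace.proj (𝕜 := ℝ) i).hasFDerivAt.comp_hasDerivAt t h

open SphericalCurve in
theorem stereo_immersion {f : ℝ → ℂ} {f' : ℂ} {t : ℝ} (h : HasDerivAt f f' t)
    (h0 : HasDerivAt (fun x => stereoInv (f x)) 0 t) : f' = 0 := by
  have c0 := (hasDerivAt_coord h0 0).ofReal_comp
  have c1 := (hasDerivAt_coord h0 1).ofReal_comp
  have c2 := ((hasDerivAt_coord h0 2).const_sub 1).ofReal_comp
  have := (c0.add (c1.mul_const Complex.I)).div c2 (by exact_mod_cast one_sub_ne (f t))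
  have e : f = fun x => (((stereoInv (f x) 0 : ℝ) : ℂ) + ((stereoInv (f x) 1 : ℝ) : ℂ) * Complex.I)
    / ((1 - stereoInv (f x) 2 : ℝ) : ℂ) := by funext x; exact stereo_left (f x)
  rw [e] at h
  have := h.unique this
  simpa using this

open SphericalCurve in
theorem planarSR (H D : ℝ → ℝ → ℂ) (hc : Continuous fun q : ℝ × ℝ => H q.1 q.2)
    (hD : Continuous fun q : ℝ × ℝ => D q.1 q.2)
    (hder : ∀ s t, HasDerivAt (H s) (D s t) t)
    (hp : ∀ s : ℝ, Function.Periodic (H s) 1)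
    (hs : ∀ s : ℝ, ContDiff ℝ (⊤ : ℕ∞) (H s))
    (hi : ∀ s ∈ Icc (0:ℝ) 1, ∀ t : ℝ, D s t ≠ 0) :
    SR (fun t => stereoInv (H 0 t)) (fun t => stereoInv (H 1 t)) := by
  have hd : ∀ s t, HasDerivAt (fun x => stereoInv (H s x)) (fderiv ℝ stereoInv (H s t) (D s t)) t := by
    intro s t
    exact ((contDiff_stereoInv.differentiable (by simp)) (H s t)).hasFDerivAt.comp_hasDerivAt t (hder s t)
  refine SR.mk (fun s t => stereoInv (H s t)) (contDiff_stereoInv.continuous.comp hc) ?_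
    (fun s t => norm_stereoInv _) (fun s t => by simp only [hp s t])
    (fun s => contDiff_stereoInv.comp (hs s)) ?_
  · have : (fun q : ℝ × ℝ => deriv (fun t => stereoInv (H q.1 t)) q.2) =
        fun q : ℝ × ℝ => fderiv ℝ stereoInv (H q.1 q.2) (D q.1 q.2) := by
      funext q; exact (hd _ _).deriv
    rw [this]
    exact ((contDiff_stereoInv.continuous_fderiv (by simp)).comp hc).clm_apply hD
  · intro s hs t h
    have h1 := hd s t
    have h2 := h1.deriv
    rw [h] at h2
    rw [← h2] at h1
    exact hi s hs t (stereo_immersion (hder s t) h1)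

open MeasureTheory in
theorem strict_mean {f : ℝ → ℂ} (hf : Continuous f) (hn : ∀ t, ‖f t‖ = 1)
    (hp : Function.Periodic f 1) : ‖∫ t in (0:ℝ)..1, f t‖ < 1 ∨ ∀ t, f t = f 0 := by
  rcases ae_eq_const_or_norm_setIntegral_lt_of_norm_le_const (μ := volume) (t := Ioc (0:ℝ) 1)
    (f := f) (C := 1) (by simp) (by simp [hn]) with h | h
  · right
    rw [Filter.EventuallyEq, ae_restrict_congr_set Ioc_ae_eq_Icc] at h
    have h2 := Measure.eqOn_Icc_of_ae_eq volume (zero_ne_one) h hf.continuousOn continuousOn_const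
    intro t
    obtain ⟨y, hy, e⟩ := hp.exists_mem_Ico₀ one_pos t
    rw [e, h2 (Ico_subset_Icc_self hy), h2 (left_mem_Icc.2 zero_le_one)]
    rfl
  · left
    rw [intervalIntegral.integral_of_le zero_le_one]
    simpa using h

theorem exp_const {f : ℝ → ℂ} (hf : Continuous f) (h : ∀ t, Complex.exp (f t) = Complex.exp (f 0))
    (t : ℝ) : f t = f 0 := by
  have h1 : ∀ t, ∃ n : ℤ, f t = f 0 + n * (2 * Real.pi * Complex.I) := by
    intro t
    exact Complex.exp_eq_exp_iff_exists_int.1 (h t)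
  choose n hn using h1
  have hc : Continuous n := by
    rw [Int.isClosedEmbedding_coe_real.isEmbedding.continuous_iff]
    have : (Int.cast ∘ n : ℝ → ℝ) = fun t => ((f t - f 0).im) / (2 * Real.pi) := by
      funext t
      rw [hn t]
      have := Real.pi_pos
      simp
    rw [this]
    have : Continuous fun t => (f t - f 0).im := Complex.continuous_im.comp (hf.sub continuous_const)
    exact this.div_const _
  have h0 := hn 0
  have : n t = n 0 := PreconnectedSpace.constant inferInstance hc
  rw [hn t, this]
  exact h0.symm

/-- The closed curve with velocity `g` minus its mean. -/
def Cv (a : ℂ) (g : ℝ → ℂ) (t : ℝ) : ℂ := a + (∫ x in (0:ℝ)..t, g x) - t * ∫ x in (0:ℝ)..1, g x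

theorem hasDerivAt_Cv {a : ℂ} {g : ℝ → ℂ} (hg : Continuous g) (t : ℝ) :
    HasDerivAt (Cv a g) (g t - ∫ x in (0:ℝ)..1, g x) t := by
  have h1 : HasDerivAt (fun t => ∫ x in (0:ℝ)..t, g x) (g t) t :=
    intervalIntegral.integral_hasDerivAt_right (hg.intervalIntegrable _ _)
      (hg.stronglyMeasurableAtFilter _ _) hg.continuousAt
  have h2 := (hasDerivAt_id t).ofReal_comp.mul_const (∫ x in (0:ℝ)..1, g x)
  have := (h1.const_add a).sub h2
  simpa using! this

theorem periodic_Cv {a : ℂ} {g : ℝ → ℂ} (hg : Continuous g) (hp : Function.Periodic g 1) :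
    Function.Periodic (Cv a g) 1 := by
  intro t
  have h1 := hp.intervalIntegral_add_eq t 0
  have h2 := intervalIntegral.integral_add_adjacent_intervals (hg.intervalIntegrable (μ := MeasureTheory.volume) 0 t)
    (hg.intervalIntegrable t (t+1))
  simp only [Cv]
  rw [← h2, h1]
  push_cast
  simp only [zero_add]
  ring

theorem contDiff_Cv {a : ℂ} {g : ℝ → ℂ} (hg : ContDiff ℝ (⊤ : ℕ∞) g) :
    ContDiff ℝ (⊤ : ℕ∞) (Cv a g) := by
  rw [contDiff_infty_iff_deriv]
  refine ⟨fun t => (hasDerivAt_Cv hg.continuous t).differentiableAt, ?_⟩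
  have : deriv (Cv a g) = fun t => g t - ∫ x in (0:ℝ)..1, g x :=
    funext fun t => (hasDerivAt_Cv hg.continuous t).deriv
  rw [this]
  exact hg.sub contDiff_const

open SphericalCurve in
theorem primSR (a : ℝ → ℂ) (g : ℝ → ℝ → ℂ) (ha : Continuous a)
    (hg : Continuous fun q : ℝ × ℝ => g q.1 q.2)
    (hp : ∀ s : ℝ, Function.Periodic (g s) 1)
    (hs : ∀ s : ℝ, ContDiff ℝ (⊤ : ℕ∞) (g s))
    (hi : ∀ s ∈ Icc (0:ℝ) 1, ∀ t : ℝ, g s t ≠ ∫ x in (0:ℝ)..1, g s x) :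
    SR (fun t => stereoInv (Cv (a 0) (g 0) t)) (fun t => stereoInv (Cv (a 1) (g 1) t)) := by
  have hM : Continuous fun s : ℝ => ∫ x in (0:ℝ)..1, g s x :=
    intervalIntegral.continuous_parametric_intervalIntegral_of_continuous hg continuous_const
  have hM' : Continuous fun q : ℝ × ℝ => ∫ x in (0:ℝ)..1, g q.1 x := hM.comp continuous_fst
  refine planarSR (fun s => Cv (a s) (g s)) (fun s t => g s t - ∫ x in (0:ℝ)..1, g s x) ?_ ?_ ?_ ?_ ?_ ?_
  · have : Continuous fun q : ℝ × ℝ => ∫ t in (0:ℝ)..q.2, g q.1 t :=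
      intervalIntegral.continuous_parametric_primitive_of_continuous hg
    exact ((ha.comp continuous_fst).add this).sub
      ((Complex.continuous_ofReal.comp continuous_snd).mul hM')
  · exact hg.sub hM'
  · exact fun s t => hasDerivAt_Cv (hs s).continuous t
  · exact fun s => periodic_Cv (hs s).continuous (hp s)
  · exact fun s => contDiff_Cv (hs s)
  · exact fun s h t => sub_ne_zero.2 (hi s h t)

/-- Planar closed immersed curve with rotation number `m`. -/
def PW (γ : ℝ → ℂ) (m : ℤ) : Prop := Function.Periodic γ 1 ∧ ∃ φ : ℝ → ℂ,
  ContDiff ℝ (⊤ : ℕ∞) φ ∧ (∀ t, HasDerivAt γ (Complex.exp (φ t)) t) ∧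
    ∀ t, φ (t + 1) = φ t + 2 * Real.pi * m * Complex.I

/-- Unit velocity with angle `θ`. -/
def uv (θ : ℝ → ℝ) (t : ℝ) : ℂ := Complex.exp (θ t * Complex.I)

theorem norm_uv (θ : ℝ → ℝ) (t : ℝ) : ‖uv θ t‖ = 1 := Complex.norm_exp_ofReal_mul_I _

theorem periodic_uv {θ : ℝ → ℝ} {m : ℤ} (h : ∀ t, θ (t + 1) = θ t + 2 * Real.pi * m) :
    Function.Periodic (uv θ) 1 := by
  intro t
  simp only [uv, h]
  rw [Complex.exp_eq_exp_iff_exists_int]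
  exact ⟨m, by push_cast; ring⟩

theorem contDiff_uv {θ : ℝ → ℝ} (h : ContDiff ℝ (⊤ : ℕ∞) θ) : ContDiff ℝ (⊤ : ℕ∞) (uv θ) :=
  ((Complex.ofRealCLM.contDiff.comp h).mul contDiff_const).cexp

theorem uv_mean {θ : ℝ → ℝ} {m : ℤ} (hθ : ContDiff ℝ (⊤ : ℕ∞) θ)
    (h : ∀ t, θ (t + 1) = θ t + 2 * Real.pi * m) (hx : ∃ x y, θ x ≠ θ y) :
    ‖∫ t in (0:ℝ)..1, uv θ t‖ < 1 := by
  rcases strict_mean (contDiff_uv hθ).continuous (norm_uv θ) (periodic_uv h) with h1 | h1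
  · exact h1
  · exfalso
    have hc : Continuous fun t => (θ t : ℂ) * Complex.I :=
      (Complex.continuous_ofReal.comp hθ.continuous).mul continuous_const
    have := exp_const hc h1
    obtain ⟨x, y, hxy⟩ := hx
    apply hxy
    have e : (θ x : ℂ) * Complex.I = θ y * Complex.I := (this x).trans (this y).symm
    have := mul_right_cancel₀ Complex.I_ne_zero e
    exact_mod_cast this

open SphericalCurve in
theorem thetaSR (θ : ℝ → ℝ → ℝ) (m : ℤ) (hc : Continuous fun q : ℝ × ℝ => θ q.1 q.2)
    (hs : ∀ s, ContDiff ℝ (⊤ : ℕ∞) (θ s)) (h : ∀ s t, θ s (t + 1) = θ s t + 2 * Real.pi * m)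
    (hx : ∀ s ∈ Icc (0:ℝ) 1, ∃ x y, θ s x ≠ θ s y) (a b : ℂ) (κ κ' : ℝ) (hκ : 0 < κ) (hκ' : 0 < κ') :
    SR (fun t => stereoInv (Cv a (fun t => κ * uv (θ 0) t) t))
      (fun t => stereoInv (Cv b (fun t => κ' * uv (θ 1) t) t)) := by
  have := primSR (fun s => (1 - s) * a + s * b)
    (fun s t => (((1 - s) * κ + s * κ' : ℝ) : ℂ) * uv (θ s) t) (by fun_prop) ?_ ?_ ?_ ?_
  · simpa using this
  · have : Continuous fun q : ℝ × ℝ => uv (θ q.1) q.2 :=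
      Complex.continuous_exp.comp ((Complex.continuous_ofReal.comp hc).mul continuous_const)
    exact (Continuous.mul (by fun_prop) this)
  · intro s t
    simp only [periodic_uv (h s) t]
  · exact fun s => contDiff_const.mul (contDiff_uv (hs s))
  · intro s hs' t e
    have hpos : 0 < (1 - s) * κ + s * κ' := by
      rcases hs' with ⟨h0, h1⟩
      rcases h0.eq_or_lt with h0 | h0
      · subst h0; simpa
      · have := mul_pos h0 hκ'
        have : 0 ≤ (1 - s) * κ := mul_nonneg (by linarith) hκ.le
        linarith
    rw [intervalIntegral.integral_const_mul] at e
    have e2 := mul_left_cancel₀ (Complex.ofReal_ne_zero.2 hpos.ne') e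
    have h3 := uv_mean (hs s) (h s) (hx s hs')
    rw [← e2, norm_uv] at h3
    exact lt_irrefl _ h3

open SphericalCurve in
theorem normalizeSR {γ : ℝ → ℂ} {m : ℤ} (hγ : PW γ m) : ∃ (κ : ℝ) (θ : ℝ → ℝ), 0 < κ ∧
    ContDiff ℝ (⊤ : ℕ∞) θ ∧ (∀ t, θ (t + 1) = θ t + 2 * Real.pi * m) ∧ (∃ x y, θ x ≠ θ y) ∧
    SR (fun t => stereoInv (γ t)) (fun t => stereoInv (Cv (γ 0) (fun t => κ * uv θ t) t)) := by
  obtain ⟨hp, φ, hφ, hd, hm⟩ := hγ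
  have hcont : Continuous fun t => Complex.exp (φ t) := Complex.continuous_exp.comp hφ.continuous
  let θ : ℝ → ℝ := fun t => (φ t).im
  have hθ : ContDiff ℝ (⊤ : ℕ∞) θ := Complex.imCLM.contDiff.comp hφ
  have hθm : ∀ t, θ (t + 1) = θ t + 2 * Real.pi * m := by
    intro t; simp [θ, hm]
  have hrp : Function.Periodic (fun t => Real.exp (φ t).re) 1 := by
    intro t; simp [hm]
  have hrc : Continuous (fun t => Real.exp (φ t).re) :=
    Real.continuous_exp.comp (Complex.continuous_re.comp hφ.continuous)
  have hfac : ∀ t, Complex.exp (φ t) = (Real.exp (φ t).re : ℝ) * uv θ t := by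
    intro t
    simp only [uv, θ]
    rw [Complex.ofReal_exp, ← Complex.exp_add, Complex.re_add_im]
  have hint : ∀ t : ℝ, ∫ x in (0:ℝ)..t, Complex.exp (φ x) = γ t - γ 0 := by
    intro t
    exact intervalIntegral.integral_eq_sub_of_hasDerivAt (fun x _ => hd x)
      (hcont.intervalIntegrable _ _)
  have hint1 : ∫ x in (0:ℝ)..1, Complex.exp (φ x) = 0 := by
    rw [hint, sub_eq_zero]; simpa using hp 0
  have hx : ∃ x y, θ x ≠ θ y := by
    by_contra hcon
    push Not at hcon
    have e1 : ∀ t, Complex.exp (φ t) = ((Real.exp (φ t).re : ℝ) : ℂ) * uv θ 0 := by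
      intro t; rw [hfac]; simp only [uv, hcon t 0]
    simp_rw [e1] at hint1
    rw [intervalIntegral.integral_mul_const, intervalIntegral.integral_ofReal] at hint1
    rcases mul_eq_zero.1 hint1 with h0 | h0
    · have : 0 < ∫ x in (0:ℝ)..1, Real.exp (φ x).re :=
        intervalIntegral.intervalIntegral_pos_of_pos (hrc.intervalIntegrable _ _)
          (fun x => Real.exp_pos _) zero_lt_one
      exact this.ne' (by exact_mod_cast h0)
    · exact Complex.exp_ne_zero _ h0
  obtain ⟨x0, hx0, hmin⟩ := isCompact_Icc.exists_isMinOn (nonempty_Icc.2 (zero_le_one' ℝ)) hrc.continuousOn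
  set κ : ℝ := Real.exp (φ x0).re
  have hκ : 0 < κ := Real.exp_pos _
  have hle : ∀ t, κ ≤ Real.exp (φ t).re := by
    intro t
    obtain ⟨y, hy, e⟩ := hrp.exists_mem_Ico₀ one_pos t
    rw [e]
    exact hmin (Ico_subset_Icc_self hy)
  refine ⟨κ, θ, hκ, hθ, hθm, hx, ?_⟩
  have := primSR (fun _ => γ 0)
    (fun s t => (((1 - s) * Real.exp (φ t).re + s * κ : ℝ) : ℂ) * uv θ t) (by fun_prop) ?_ ?_ ?_ ?_
  · have e : (fun t => ((((1 - 0) * Real.exp (φ t).re + 0 * κ : ℝ)) : ℂ) * uv θ t) =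
        fun t => Complex.exp (φ t) := by
      funext t; rw [hfac]; simp
    rw [e] at this
    have e2 : Cv (γ 0) (fun t => Complex.exp (φ t)) = γ := by
      funext t; simp only [Cv]; rw [hint1, hint]; ring
    rw [e2] at this
    simpa using this
  · have h1 : Continuous fun q : ℝ × ℝ => uv θ q.2 := (contDiff_uv hθ).continuous.comp continuous_snd
    have h2 : Continuous fun q : ℝ × ℝ => Real.exp (φ q.2).re := hrc.comp continuous_snd
    exact (Continuous.mul (by fun_prop) h1)
  · intro s t
    have := hrp t
    simp only at this
    simp only [periodic_uv hθm t, this]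
  · intro s
    have h3 : ContDiff ℝ (⊤ : ℕ∞) fun t => Real.exp (φ t).re := (Complex.reCLM.contDiff.comp hφ).exp
    exact (Complex.ofRealCLM.contDiff.comp ((contDiff_const.mul h3).add contDiff_const)).mul (contDiff_uv hθ)
  · intro s hs t e
    have hI : ∫ x in (0:ℝ)..1, ((((1 - s) * Real.exp (φ x).re + s * κ : ℝ)) : ℂ) * uv θ x
        = (s * κ : ℝ) * ∫ x in (0:ℝ)..1, uv θ x := by
      have : (fun x => ((((1 - s) * Real.exp (φ x).re + s * κ : ℝ)) : ℂ) * uv θ x)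
          = fun x => ((1 - s : ℝ) : ℂ) * Complex.exp (φ x) + ((s * κ : ℝ) : ℂ) * uv θ x := by
        funext x; rw [hfac]; push_cast; ring
      rw [this, intervalIntegral.integral_add, intervalIntegral.integral_const_mul,
        intervalIntegral.integral_const_mul, hint1]
      · simp
      · exact (continuous_const.mul hcont).intervalIntegrable _ _
      · exact (continuous_const.mul (contDiff_uv hθ).continuous).intervalIntegrable _ _
    rw [hI] at e
    have h3 := uv_mean hθ hθm hx
    have h4 := congrArg norm e
    rw [norm_mul, norm_mul, norm_uv, Complex.norm_real, Complex.norm_real, Real.norm_eq_abs,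
      Real.norm_eq_abs] at h4
    have h5 : κ ≤ (1 - s) * Real.exp (φ t).re + s * κ := by
      nlinarith [mul_le_mul_of_nonneg_left (hle t) (by linarith [hs.2] : 0 ≤ 1 - s)]
    have h6 := le_abs_self ((1 - s) * Real.exp (φ t).re + s * κ)
    rw [abs_of_nonneg (mul_nonneg hs.1 hκ.le)] at h4
    have h7 : s * κ * ‖∫ x in (0:ℝ)..1, uv θ x‖ ≤ κ * ‖∫ x in (0:ℝ)..1, uv θ x‖ := by
      apply mul_le_mul_of_nonneg_right _ (norm_nonneg _)
      nlinarith [hs.2]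
    have h8 : κ * ‖∫ x in (0:ℝ)..1, uv θ x‖ < κ := by nlinarith
    linarith

open SphericalCurve in
theorem cosSR {κ : ℝ} {θ : ℝ → ℝ} {a : ℂ} (hκ : 0 < κ) (hθ : ContDiff ℝ (⊤ : ℕ∞) θ)
    (h : ∀ t, θ (t + 1) = θ t) (hx : ∃ x y, θ x ≠ θ y) :
    SR (fun t => stereoInv (Cv a (fun t => κ * uv θ t) t))
      (fun t => stereoInv (Cv 0 (fun t => (1:ℝ) * uv (fun t => Real.cos (2 * Real.pi * t)) t) t)) := by
  have hcosS : ∀ y : ℝ, ContDiff ℝ (⊤ : ℕ∞) fun t : ℝ => Real.cos (2 * Real.pi * (t - y)) := by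
    intro y
    fun_prop
  have hper : ∀ y t : ℝ, Real.cos (2 * Real.pi * (t + 1 - y)) = Real.cos (2 * Real.pi * (t - y)) := by
    intro y t
    rw [← Real.cos_add_two_pi (2 * Real.pi * (t - y))]
    congr 1; ring
  obtain ⟨x, y, hxy⟩ : ∃ x y, θ x < θ y := by
    obtain ⟨x, y, hxy⟩ := hx
    rcases lt_or_gt_of_ne hxy with h1 | h1
    exacts [⟨x, y, h1⟩, ⟨y, x, h1⟩]
  have hcos : Real.cos (2 * Real.pi * (x - y)) < Real.cos (2 * Real.pi * (y - y)) := by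
    simp only [sub_self, mul_zero, Real.cos_zero]
    refine lt_of_le_of_ne (Real.cos_le_one _) ?_
    intro hc
    obtain ⟨n, hn⟩ := (Real.cos_eq_one_iff _).1 hc
    have hn' : x = y + n * 1 := by
      have := Real.pi_pos
      have h2 : (2 * Real.pi) * (n : ℝ) = (2 * Real.pi) * (x - y) := by linarith
      have := mul_left_cancel₀ (by positivity) h2
      linarith
    have hp : Function.Periodic θ 1 := h
    rw [hn', (hp.int_mul n) y] at hxy
    exact lt_irrefl _ hxy
  have s1 := thetaSR (fun s t => (1 - s) * θ t + s * Real.cos (2 * Real.pi * (t - y))) 0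
    (by have := hθ.continuous; fun_prop)
    (fun s => (contDiff_const.mul hθ).add (contDiff_const.mul (hcosS y)))
    (by intro s t; simp [h, hper])
    (by
      intro s hs
      refine ⟨x, y, ne_of_lt ?_⟩
      rcases hs.1.eq_or_lt with h0 | h0
      · subst h0; simpa using hxy
      · have h1 := mul_lt_mul_of_pos_left hcos h0
        have h2 := mul_le_mul_of_nonneg_left hxy.le (by linarith [hs.2] : 0 ≤ 1 - s)
        linarith) a 0 κ 1 hκ one_pos
  have s2 := thetaSR (fun s t => Real.cos (2 * Real.pi * (t - (1 - s) * y))) 0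
    (by fun_prop)
    (fun s => hcosS _)
    (by intro s t; simp [hper])
    (by
      intro s hs
      refine ⟨(1 - s) * y, (1 - s) * y + 1/2, ?_⟩
      have : 2 * Real.pi * ((1 - s) * y + 1/2 - (1 - s) * y) = Real.pi := by ring
      simp only [this]
      norm_num) 0 0 1 1 one_pos one_pos
  simp only [sub_zero, one_mul, zero_mul, add_zero, sub_self, zero_add] at s1 s2
  exact s1.trans s2

open SphericalCurve in
theorem whitneyGraustein {γ γ' : ℝ → ℂ} {m : ℤ} (h : PW γ m) (h' : PW γ' m) :
    SR (fun t => stereoInv (γ t)) (fun t => stereoInv (γ' t)) := by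
  obtain ⟨κ, θ, hκ, hθ, hθm, hx, hS⟩ := normalizeSR h
  obtain ⟨κ', θ', hκ', hθ', hθm', hx', hS'⟩ := normalizeSR h'
  refine hS.trans (SR.trans ?_ hS'.symm)
  by_cases hm : m = 0
  · subst hm
    exact (cosSR hκ hθ (by simpa using hθm) hx).trans (cosSR hκ' hθ' (by simpa using hθm') hx').symm
  · have s1 := thetaSR (fun s t => (1 - s) * θ t + s * θ' t) m
      (by have := hθ.continuous; have := hθ'.continuous; fun_prop)
      (fun s => (contDiff_const.mul hθ).add (contDiff_const.mul hθ'))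
      (by intro s t; simp only [hθm, hθm']; ring)
      (by
        intro s hs
        refine ⟨0 + 1, 0, ?_⟩
        simp only [hθm, hθm']
        intro e
        have : 2 * Real.pi * (m:ℝ) = 0 := by linarith
        have hpi := Real.pi_pos
        simp [hm, hpi.ne'] at this) (γ 0) (γ' 0) κ κ' hκ hκ'
    simpa using s1

abbrev QQ := Quaternion ℝ

def toQl : E3 →ₗ[ℝ] QQ where
  toFun p := ⟨0, p 0, p 1, p 2⟩
  map_add' x y := by
    apply Quaternion.ext
    · exact (add_zero (0:ℝ)).symm
    · rfl
    · rfl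
    · rfl
  map_smul' r x := by
    apply Quaternion.ext
    · exact (mul_zero r).symm
    · rfl
    · rfl
    · rfl

@[simp] theorem one_reQ : (1 : QQ).re = 1 := rfl
@[simp] theorem one_imIQ : (1 : QQ).imI = 0 := rfl
@[simp] theorem one_imJQ : (1 : QQ).imJ = 0 := rfl
@[simp] theorem one_imKQ : (1 : QQ).imK = 0 := rfl
@[simp] theorem zero_reQ : (0 : QQ).re = 0 := rfl
@[simp] theorem zero_imIQ : (0 : QQ).imI = 0 := rfl
@[simp] theorem zero_imJQ : (0 : QQ).imJ = 0 := rfl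
@[simp] theorem zero_imKQ : (0 : QQ).imK = 0 := rfl

def ofQl : QQ →ₗ[ℝ] E3 where
  toFun q := !₂[q.imI, q.imJ, q.imK]
  map_add' x y := by ext i; fin_cases i <;> simp
  map_smul' r x := by ext i; fin_cases i <;> simp

def toQ : E3 →L[ℝ] QQ := toQl.toContinuousLinearMap
def ofQ : QQ →L[ℝ] E3 := ofQl.toContinuousLinearMap

@[simp] theorem toQ_re (p : E3) : (toQ p).re = 0 := rfl
@[simp] theorem toQ_imI (p : E3) : (toQ p).imI = p 0 := rfl
@[simp] theorem toQ_imJ (p : E3) : (toQ p).imJ = p 1 := rfl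
@[simp] theorem toQ_imK (p : E3) : (toQ p).imK = p 2 := rfl
@[simp] theorem ofQ_0 (q : QQ) : ofQ q 0 = q.imI := rfl
@[simp] theorem ofQ_1 (q : QQ) : ofQ q 1 = q.imJ := rfl
@[simp] theorem ofQ_2 (q : QQ) : ofQ q 2 = q.imK := rfl

theorem E3_ext {x y : E3} (h0 : x 0 = y 0) (h1 : x 1 = y 1) (h2 : x 2 = y 2) : x = y := by
  ext i; fin_cases i
  exacts [h0, h1, h2]

theorem ofQ_toQ (p : E3) : ofQ (toQ p) = p := by
  apply E3_ext <;> simp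

theorem toQ_ofQ {q : QQ} (h : q.re = 0) : toQ (ofQ q) = q := by
  ext <;> simp [h]

theorem norm_toQ (p : E3) : ‖toQ p‖ = ‖p‖ := by
  have h1 : ‖toQ p‖ ^ 2 = ‖p‖ ^ 2 := by
    rw [sq, ← Quaternion.normSq_eq_norm_mul_self, Quaternion.normSq_def', EuclideanSpace.norm_sq_eq,
      Fin.sum_univ_three]
    simp
  exact (sq_eq_sq₀ (norm_nonneg _) (norm_nonneg _)).1 h1

theorem inner_E3 (x y : E3) : inner ℝ x y = x 0 * y 0 + x 1 * y 1 + x 2 * y 2 := by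
  rw [PiLp.inner_apply, Fin.sum_univ_three]
  simp
  ring

theorem toQ_anti (x y : E3) : toQ x * toQ y + toQ y * toQ x = ((-2 * inner ℝ x y : ℝ) : QQ) := by
  rw [inner_E3]
  ext <;> simp <;> ring

theorem toQ_anti' {x y : E3} (h : inner ℝ x y = 0) : toQ x * toQ y = - (toQ y * toQ x) := by
  have := toQ_anti x y
  rw [h] at this
  simp at this
  exact eq_neg_of_add_eq_zero_left this

theorem toQ_sq {x : E3} (h : ‖x‖ = 1) : toQ x * toQ x = -1 := by
  have h2 : x 0 ^ 2 + x 1 ^ 2 + x 2 ^ 2 = 1 := by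
    have := EuclideanSpace.norm_sq_eq x
    rw [h, Fin.sum_univ_three] at this
    simp at this
    exact this.symm
  ext
  · simp; linarith
  · simp; ring
  · simp; ring
  · simp; ring

theorem re_conj {q x : QQ} (hq : q ≠ 0) (hx : x.re = 0) : (q * x * q⁻¹).re = 0 := by
  have h : (q * x * star q).re = 0 := by
    simp [hx]; ring
  rw [Quaternion.inv_def, mul_smul_comm]
  simp [-Quaternion.re_mul, h]

def Rot (q : QQ) : E3 →L[ℝ] E3 :=
  ofQ ∘L (ContinuousLinearMap.mulLeftRight ℝ QQ q q⁻¹) ∘L toQ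

theorem Rot_apply (q : QQ) (x : E3) : Rot q x = ofQ (q * toQ x * q⁻¹) := rfl

theorem toQ_Rot {q : QQ} (hq : q ≠ 0) (x : E3) : toQ (Rot q x) = q * toQ x * q⁻¹ := by
  rw [Rot_apply, toQ_ofQ (re_conj hq (toQ_re x))]

theorem norm_Rot {q : QQ} (hq : q ≠ 0) (x : E3) : ‖Rot q x‖ = ‖x‖ := by
  rw [← norm_toQ, toQ_Rot hq, norm_mul, norm_mul, norm_inv, norm_toQ]
  have : ‖q‖ ≠ 0 := norm_ne_zero_iff.2 hq
  field_simp

theorem Rot_inv {q : QQ} (hq : q ≠ 0) (x : E3) : Rot q (Rot q⁻¹ x) = x := by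
  rw [Rot_apply q, toQ_Rot (inv_ne_zero hq), inv_inv]
  have : q * (q⁻¹ * toQ x * q) * q⁻¹ = toQ x := by
    simp only [← mul_assoc]
    rw [mul_inv_cancel₀ hq, one_mul, mul_assoc, mul_inv_cancel₀ hq, mul_one]
  rw [this, ofQ_toQ]

theorem inner_Rot {q : QQ} (hq : q ≠ 0) (x y : E3) : inner ℝ (Rot q x) (Rot q y) = inner ℝ x y := by
  let L : E3 →ₗᵢ[ℝ] E3 := ⟨(Rot q).toLinearMap, fun x => norm_Rot hq x⟩
  exact L.inner_map_map x y

theorem rotSR {f : ℝ → E3} (hn : ∀ t, ‖f t‖ = 1) (hp : Function.Periodic f 1)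
    (hs : ContDiff ℝ (⊤ : ℕ∞) f) (hi : ∀ t, deriv f t ≠ 0) {q : QQ} (hq : q ≠ 0) :
    SR f (fun t => Rot q (f t)) := by
  have hrank : 1 < Module.rank ℝ QQ := by
    rw [Quaternion.rank_eq_four]; norm_num
  obtain ⟨γ, hγ⟩ := (isPathConnected_compl_singleton_of_one_lt_rank hrank (0 : QQ)).joinedIn
    1 (by simp) q (by simpa)
  let Q : ℝ → QQ := γ.extend
  have hQ : Continuous Q := γ.continuous_extend
  have hQ0 : ∀ s, Q s ≠ 0 := by
    intro s
    exact hγ _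
  have hd : ∀ s t, HasDerivAt (fun t => Rot (Q s) (f t)) (Rot (Q s) (deriv f t)) t := by
    intro s t
    exact (Rot (Q s)).hasFDerivAt.comp_hasDerivAt t ((hs.differentiable (by simp)) t).hasDerivAt
  have hcont : ∀ g : ℝ → E3, Continuous g → Continuous fun p : ℝ × ℝ => Rot (Q p.1) (g p.2) := by
    intro g hg
    simp only [Rot_apply]
    have h1 : Continuous fun p : ℝ × ℝ => Q p.1 := hQ.comp continuous_fst
    exact ofQ.continuous.comp ((h1.mul (toQ.continuous.comp (hg.comp continuous_snd))).mul
      (h1.inv₀ (fun p => hQ0 _)))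
  have := SR.mk (fun s t => Rot (Q s) (f t)) (hcont f hs.continuous) ?_ ?_ ?_ ?_ ?_
  · have e0 : Q 0 = 1 := γ.extend_zero
    have e1 : Q 1 = q := γ.extend_one
    simp only [e0, e1] at this
    have e2 : ∀ x, Rot 1 x = x := by
      intro x; simp [Rot_apply, ofQ_toQ]
    simpa [e2] using this
  · simp only [(hd _ _).deriv]
    exact hcont _ (hs.continuous_deriv (by simp))
  · intro s t; rw [norm_Rot (hQ0 s), hn]
  · intro s t; simp only [hp t]
  · intro s; exact (Rot (Q s)).contDiff.comp hs
  · intro s _ t h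
    rw [(hd s t).deriv] at h
    have := norm_Rot (hQ0 s) (deriv f t)
    rw [h] at this
    simp at this
    exact hi t (norm_eq_zero.1 this.symm)

def qi : QQ := ⟨0, 1, 0, 0⟩
def qj : QQ := ⟨0, 0, 1, 0⟩
def qk : QQ := ⟨0, 0, 0, 1⟩

@[simp] theorem qi_re : qi.re = 0 := rfl
@[simp] theorem qi_imI : qi.imI = 1 := rfl
@[simp] theorem qi_imJ : qi.imJ = 0 := rfl
@[simp] theorem qi_imK : qi.imK = 0 := rfl
@[simp] theorem qj_re : qj.re = 0 := rfl
@[simp] theorem qj_imI : qj.imI = 0 := rfl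
@[simp] theorem qj_imJ : qj.imJ = 1 := rfl
@[simp] theorem qj_imK : qj.imK = 0 := rfl
@[simp] theorem qk_re : qk.re = 0 := rfl
@[simp] theorem qk_imI : qk.imI = 0 := rfl
@[simp] theorem qk_imJ : qk.imJ = 0 := rfl
@[simp] theorem qk_imK : qk.imK = 1 := rfl

theorem intertwine {a b : QQ} (ha : a * a = -1) (hb : b * b = -1) (hab : a * b = -(b * a)) :
    ∃ q : QQ, q ≠ 0 ∧ q * qi = a * q ∧ q * qj = b * q := by
  have hba : b * a = - (a * b) := by rw [hab, neg_neg]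
  have haab : a * a * b = -b := by rw [ha]; simp
  have hbab : b * a * b = a := by rw [hba, neg_mul, mul_assoc, hb]; simp
  let T : QQ → QQ := fun x => x - a * x * qi - b * x * qj - a * b * x * qk
  have hii : qi * qi = -1 := by ext <;> simp
  have hij : qi * qj = qk := by ext <;> simp
  have hji : qj * qi = -qk := by ext <;> simp
  have hjj : qj * qj = -1 := by ext <;> simp
  have hki : qk * qi = qj := by ext <;> simp
  have hkj : qk * qj = -qi := by ext <;> simp
  have h1 : ∀ x, T x * qi = a * T x := by
    intro x
    have e1 : T x * qi = x * qi + a * x + b * x * qk - a * b * x * qj := by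
      simp only [T, sub_mul, mul_assoc, hii, hji, hki]
      noncomm_ring
    have e2 : a * T x = a * x + x * qi - a * b * x * qj + b * x * qk := by
      simp only [T, mul_sub, ← mul_assoc, ha]
      noncomm_ring
    rw [e1, e2]; abel
  have h2 : ∀ x, T x * qj = b * T x := by
    intro x
    have e1 : T x * qj = x * qj - a * x * qk + b * x + a * b * x * qi := by
      simp only [T, sub_mul, mul_assoc, hij, hjj, hkj]
      noncomm_ring
    have e2 : b * T x = b * x + a * b * x * qi + x * qj - a * x * qk := by
      simp only [T, mul_sub, ← mul_assoc, hb, hbab]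
      rw [hba]
      noncomm_ring
    rw [e1, e2]; abel
  by_contra hcon
  push Not at hcon
  have hT : ∀ x, T x = 0 := by
    intro x
    by_contra h
    exact hcon _ h (h1 x) (h2 x)
  have h4 : T 1 - T qi * qi - T qj * qj - T qk * qk = ((4 : ℝ) : QQ) := by
    simp only [T]
    generalize a * b = c
    ext <;> simp <;> ring
  simp only [hT] at h4
  have := congrArg QuaternionAlgebra.re h4
  simp at this

theorem comm_std {x : QQ} (h1 : x * qi = qi * x) (h2 : x * qj = qj * x) : x = (x.re : QQ) := by
  have a1 := congrArg QuaternionAlgebra.imJ h1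
  have a2 := congrArg QuaternionAlgebra.imK h1
  have a3 := congrArg QuaternionAlgebra.imK h2
  simp at a1 a2 a3
  ext
  · simp
  · simp; linarith
  · simp; linarith
  · simp; linarith

theorem comm_real {a b x : QQ} (ha : a * a = -1) (hb : b * b = -1) (hab : a * b = -(b * a))
    (h1 : x * a = a * x) (h2 : x * b = b * x) : ∃ r : ℝ, x = (r : QQ) := by
  obtain ⟨q, hq, hi, hj⟩ := intertwine ha hb hab
  have key : ∀ u w : QQ, q * u = w * q → x * w = w * x → (q⁻¹ * x * q) * u = u * (q⁻¹ * x * q) := by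
    intro u w h h'
    have h3 : u * q⁻¹ = q⁻¹ * w := by
      rw [eq_inv_mul_iff_mul_eq₀ hq, ← mul_assoc, h, mul_assoc, mul_inv_cancel₀ hq, mul_one]
    calc (q⁻¹ * x * q) * u = q⁻¹ * x * (q * u) := by simp only [mul_assoc]
      _ = q⁻¹ * (x * w) * q := by rw [h]; simp only [mul_assoc]
      _ = (q⁻¹ * w) * x * q := by rw [h']; simp only [mul_assoc]
      _ = u * (q⁻¹ * x * q) := by rw [← h3]; simp only [mul_assoc]
  have := comm_std (key _ _ hi h1) (key _ _ hj h2)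
  set r := (q⁻¹ * x * q).re
  refine ⟨r, ?_⟩
  have h5 : x = q * (q⁻¹ * x * q) * q⁻¹ := by
    simp only [← mul_assoc]
    rw [mul_inv_cancel₀ hq, one_mul, mul_assoc, mul_inv_cancel₀ hq, mul_one]
  rw [h5, this, ← Quaternion.coe_commutes, mul_assoc, mul_inv_cancel₀ hq, mul_one]

theorem frame_sign {x y v : E3} (hx : ‖x‖ = 1) (hy : ‖y‖ = 1) (hv : ‖v‖ = 1)
    (hxy : inner ℝ x y = 0) (hxv : inner ℝ x v = 0) (hyv : inner ℝ y v = 0) :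
    toQ v = toQ x * toQ y ∨ toQ v = -(toQ x * toQ y) := by
  have ha := toQ_sq hx
  have hb := toQ_sq hy
  have hab := toQ_anti' hxy
  have hac := toQ_anti' hxv
  have hbc := toQ_anti' hyv
  set a := toQ x
  set b := toQ y
  set c := toQ v
  have hba : b * a = - (a * b) := by rw [hab, neg_neg]
  obtain ⟨r, hr⟩ := comm_real (x := c * (a * b)) ha hb hab
    (by
      have e1 : c * (a * b) * a = c * b := by
        rw [mul_assoc, mul_assoc, hba, mul_neg, ← mul_assoc a a b, ha]; simp
      have e2 : a * (c * (a * b)) = c * b := by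
        rw [← mul_assoc, hac, neg_mul, mul_assoc, ← mul_assoc a a b, ha]; simp
      rw [e1, e2])
    (by
      have e1 : c * (a * b) * b = - (c * a) := by
        rw [mul_assoc, mul_assoc, hb]; simp
      have e2 : b * (c * (a * b)) = - (c * a) := by
        rw [← mul_assoc, hbc, neg_mul, mul_assoc, ← mul_assoc b a b, hba, neg_mul, mul_assoc, hb]; simp
      rw [e1, e2])
  have hn : ‖c * (a * b)‖ = 1 := by
    rw [norm_mul, norm_mul, norm_toQ, norm_toQ, norm_toQ, hx, hy, hv]; simp
  rw [hr] at hn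
  have hsq : (a * b) * (a * b) = -1 := by
    rw [mul_assoc, ← mul_assoc b a b, hba, neg_mul, mul_neg, mul_assoc, hb, mul_neg, mul_neg, mul_one, ha]
    simp
  have hc : c = -(r : QQ) * (a * b) := by
    rw [← hr, neg_mul, mul_assoc, hsq]; simp
  rw [Quaternion.norm_coe, Real.norm_eq_abs, abs_eq zero_le_one] at hn
  rcases hn with h | h
  · right; rw [hc, h]; simp
  · left; rw [hc, h]; simp

theorem PW.smooth {γ : ℝ → ℂ} {m : ℤ} (h : PW γ m) : ContDiff ℝ (⊤ : ℕ∞) γ := by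
  obtain ⟨hp, φ, hφ, hd, hm⟩ := h
  rw [contDiff_infty_iff_deriv]
  refine ⟨fun t => (hd t).differentiableAt, ?_⟩
  have : deriv γ = fun t => Complex.exp (φ t) := by funext t; exact (hd t).deriv
  rw [this]
  exact hφ.cexp

open SphericalCurve in
theorem PW.sphere_smooth {γ : ℝ → ℂ} {m : ℤ} (h : PW γ m) :
    ContDiff ℝ (⊤ : ℕ∞) (fun t => stereoInv (γ t)) := contDiff_stereoInv.comp h.smooth

open SphericalCurve in
theorem PW.sphere_imm {γ : ℝ → ℂ} {m : ℤ} (h : PW γ m) (t : ℝ) :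
    deriv (fun t => stereoInv (γ t)) t ≠ 0 := by
  intro h0
  have h1 := ((h.sphere_smooth.differentiable (by simp)) t).hasDerivAt
  rw [h0] at h1
  obtain ⟨hp, φ, hφ, hd, hm⟩ := h
  exact Complex.exp_ne_zero _ (stereo_immersion (hd t) h1)

theorem qi_inv : qi⁻¹ = -qi := by
  apply inv_eq_of_mul_eq_one_right
  ext <;> simp

theorem qi_ne : qi ≠ 0 := by
  intro h
  have := congrArg QuaternionAlgebra.imI h
  simp at this

open SphericalCurve in
theorem stereoInv_inv {z : ℂ} (hz : z ≠ 0) : stereoInv z⁻¹ = Rot qi (stereoInv z) := by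
  obtain ⟨a0, a1, a2⟩ := stereoInv_apply z
  obtain ⟨b0, b1, b2⟩ := stereoInv_apply z⁻¹
  have h := nsq_pos z
  have hn : 0 < Complex.normSq z := Complex.normSq_pos.2 hz
  have hx : (Complex.normSq z)⁻¹ + 1 ≠ 0 := by positivity
  rw [Complex.inv_re, Complex.normSq_inv] at b0
  rw [Complex.inv_im, Complex.normSq_inv] at b1
  rw [Complex.normSq_inv] at b2
  apply E3_ext
  · rw [b0, Rot_apply, qi_inv]
    simp [a0]
    field_simp
    ring
  · rw [b1, Rot_apply, qi_inv]
    simp [a1]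
    field_simp
    ring
  · rw [b2, Rot_apply, qi_inv]
    simp [a2]
    field_simp
    ring

open SphericalCurve in
theorem inversion {γ ψ : ℝ → ℂ} {m : ℤ} (h : PW γ m) (hψ : ContDiff ℝ (⊤ : ℕ∞) ψ)
    (hγ : ∀ t, γ t = Complex.exp (ψ t)) (h1 : ∀ t, ψ (t + 1) = ψ t + 2 * Real.pi * Complex.I) :
    PW (fun t => (γ t)⁻¹) (m - 2) ∧
      SR (fun t => stereoInv (γ t)) (fun t => stereoInv (γ t)⁻¹) := by
  constructor
  · obtain ⟨hp, φ, hφ, hd, hm⟩ := h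
    refine ⟨fun t => by simp only [hp t], fun t => φ t + Real.pi * Complex.I - 2 * ψ t, ?_, ?_, ?_⟩
    · exact (hφ.add contDiff_const).sub (contDiff_const.mul hψ)
    · intro t
      have hne : γ t ≠ 0 := by rw [hγ]; exact Complex.exp_ne_zero _
      refine ((hd t).inv hne).congr_deriv ?_
      symm
      rw [Complex.exp_sub, Complex.exp_add, Complex.exp_pi_mul_I, two_mul, Complex.exp_add, ← hγ, sq]
      ring
    · intro t
      simp only [hm t, h1 t]
      push_cast
      ring
  · have : (fun t => stereoInv (γ t)⁻¹) = fun t => Rot qi (stereoInv (γ t)) := by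
      funext t
      exact stereoInv_inv (by rw [hγ]; exact Complex.exp_ne_zero _)
    rw [this]
    refine rotSR (fun t => norm_stereoInv _) (fun t => ?_) h.sphere_smooth h.sphere_imm qi_ne
    simp only [h.1 t]

theorem exp_int (n : ℤ) (a : ℂ) : Complex.exp (a + 2 * Real.pi * n * Complex.I) = Complex.exp a := by
  rw [Complex.exp_add, show (2 * Real.pi * n * Complex.I : ℂ) = n * (2 * Real.pi * Complex.I) by ring,
    Complex.exp_int_mul_two_pi_mul_I, mul_one]

theorem exists_logfac (k : ℤ) : ∃ L : ℝ → ℂ, ContDiff ℝ (⊤ : ℕ∞) L ∧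
    (∀ t, Complex.exp (L t) = 1 + 2 * k * Complex.exp (2 * Real.pi * k * t * Complex.I)) ∧
    ∀ t, L (t + 1) = L t + 2 * Real.pi * k * Complex.I := by
  by_cases hk : k = 0
  · subst hk
    exact ⟨fun _ => 0, contDiff_const, by simp, by simp⟩
  have hkc : (k : ℂ) ≠ 0 := by exact_mod_cast hk
  let e : ℝ → ℂ := fun t => Complex.exp (-(2 * Real.pi * k * t * Complex.I))
  have hlin : ContDiff ℝ (⊤ : ℕ∞) fun t : ℝ => (2 * Real.pi * k * t * Complex.I : ℂ) :=
    (contDiff_const.mul Complex.ofRealCLM.contDiff).mul contDiff_const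
  have he : ContDiff ℝ (⊤ : ℕ∞) e := hlin.neg.cexp
  have hen : ∀ t, ‖e t‖ = 1 := by
    intro t
    have : e t = Complex.exp ((-(2 * Real.pi * k * t) : ℝ) * Complex.I) := by
      simp only [e]; congr 1; push_cast; ring
    rw [this, Complex.norm_exp_ofReal_mul_I]
  have hslit : ∀ t, 1 + e t / (2 * k) ∈ Complex.slitPlane := by
    intro t
    apply Complex.mem_slitPlane_of_norm_lt_one
    rw [norm_div, hen, norm_mul]
    have : (1 : ℝ) ≤ ‖(k : ℂ)‖ := by
      rw [Complex.norm_intCast]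
      exact_mod_cast Int.one_le_abs hk
    rw [Complex.norm_ofNat, div_lt_one (by linarith)]
    linarith
  refine ⟨fun t => Complex.log (2 * k) + 2 * Real.pi * k * t * Complex.I
    + Complex.log (1 + e t / (2 * k)), ?_, ?_, ?_⟩
  · refine (contDiff_const.add hlin).add ?_
    rw [contDiff_iff_contDiffAt]
    intro t
    have h1 := (Complex.contDiffAt_log (hslit t) (n := (⊤ : ℕ∞))).restrict_scalars ℝ
    have h2 : ContDiff ℝ (⊤ : ℕ∞) fun t => 1 + e t / (2 * k) :=
      contDiff_const.add (he.div_const _)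
    exact h1.comp t h2.contDiffAt
  · intro t
    rw [Complex.exp_add, Complex.exp_add, Complex.exp_log (by simpa using hkc),
      Complex.exp_log (Complex.slitPlane_ne_zero (hslit t))]
    simp only [e, Complex.exp_neg]
    have := Complex.exp_ne_zero (2 * Real.pi * k * t * Complex.I)
    field_simp
    ring
  · intro t
    have : e (t + 1) = e t := by
      simp only [e]
      rw [← exp_int (-k) (-(2 * Real.pi * k * t * Complex.I))]
      congr 1
      push_cast
      ring
    simp only [this]
    push_cast
    ring

open SphericalCurve in
theorem stepSR (m : ℤ) : ∃ γ γ' : ℝ → ℂ, PW γ m ∧ PW γ' (m - 2) ∧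
    SR (fun t => stereoInv (γ t)) (fun t => stereoInv (γ' t)) := by
  obtain ⟨k, rfl⟩ : ∃ k, m = k + 1 := ⟨m - 1, by ring⟩
  obtain ⟨L, hL, hLe, hL1⟩ := exists_logfac k
  let ψ : ℝ → ℂ := fun t => 2 * Real.pi * t * Complex.I
    + 2 * Complex.exp (2 * Real.pi * k * t * Complex.I)
  have hlin : ContDiff ℝ (⊤ : ℕ∞) fun t : ℝ => (2 * Real.pi * k * t * Complex.I : ℂ) :=
    (contDiff_const.mul Complex.ofRealCLM.contDiff).mul contDiff_const
  have hlin' : ContDiff ℝ (⊤ : ℕ∞) fun t : ℝ => (2 * Real.pi * t * Complex.I : ℂ) :=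
    (contDiff_const.mul Complex.ofRealCLM.contDiff).mul contDiff_const
  have hψ : ContDiff ℝ (⊤ : ℕ∞) ψ := hlin'.add (contDiff_const.mul hlin.cexp)
  have h1 : ∀ t, ψ (t + 1) = ψ t + 2 * Real.pi * Complex.I := by
    intro t
    have : Complex.exp (2 * Real.pi * k * (t + 1 : ℝ) * Complex.I)
        = Complex.exp (2 * Real.pi * k * t * Complex.I) := by
      rw [← exp_int k (2 * Real.pi * k * t * Complex.I)]
      congr 1
      push_cast
      ring
    simp only [ψ, this]
    push_cast
    ring
  have hψd : ∀ t : ℝ, HasDerivAt ψ (2 * Real.pi * Complex.I *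
      (1 + 2 * k * Complex.exp (2 * Real.pi * k * t * Complex.I))) t := by
    intro t
    have a1 : HasDerivAt (fun t : ℝ => (2 * Real.pi * t * Complex.I : ℂ))
        (2 * Real.pi * 1 * Complex.I) t :=
      ((Complex.ofRealCLM.hasDerivAt (x := t)).const_mul _).mul_const _
    have a2 : HasDerivAt (fun t : ℝ => (2 * Real.pi * k * t * Complex.I : ℂ))
        (2 * Real.pi * k * 1 * Complex.I) t :=
      ((Complex.ofRealCLM.hasDerivAt (x := t)).const_mul _).mul_const _
    refine (a1.add (a2.cexp.const_mul 2)).congr_deriv ?_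
    ring
  have hPW : PW (fun t => Complex.exp (ψ t)) (k + 1) := by
    refine ⟨fun t => ?_, fun t => ψ t + (Complex.log (2 * Real.pi * Complex.I) + L t), ?_, ?_, ?_⟩
    · simp only [h1 t, Complex.exp_add, Complex.exp_two_pi_mul_I, mul_one]
    · exact hψ.add (contDiff_const.add hL)
    · intro t
      refine (hψd t).cexp.congr_deriv ?_
      rw [Complex.exp_add (ψ t), Complex.exp_add _ (L t), hLe, Complex.exp_log (by simp [Real.pi_ne_zero])]
    · intro t
      simp only [h1, hL1]
      push_cast
      ring
  obtain ⟨h2, h3⟩ := inversion hPW hψ (fun t => rfl) h1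
  exact ⟨_, _, hPW, h2, h3⟩

open SphericalCurve in
theorem parityAux (n : ℕ) : ∀ {γ γ' : ℝ → ℂ} {m : ℤ}, PW γ m → PW γ' (m - 2 * n) →
    SR (fun t => stereoInv (γ t)) (fun t => stereoInv (γ' t)) := by
  induction n with
  | zero =>
    intro γ γ' m h h'
    exact whitneyGraustein h (by simpa using h')
  | succ n ih =>
    intro γ γ' m h h'
    obtain ⟨g, g', hg, hg', hS⟩ := stepSR m
    refine ((whitneyGraustein h hg).trans hS).trans (ih hg' ?_)
    convert h' using 1
    push_cast; ring

open SphericalCurve in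
theorem paritySR {γ γ' : ℝ → ℂ} {m m' : ℤ} (h : PW γ m) (h' : PW γ' m')
    (hm : (m : ZMod 2) = (m' : ZMod 2)) :
    SR (fun t => stereoInv (γ t)) (fun t => stereoInv (γ' t)) := by
  rw [ZMod.intCast_eq_intCast_iff_dvd_sub] at hm
  obtain ⟨d, hd⟩ := hm
  rcases le_total 0 d with h0 | h0
  · obtain ⟨n, rfl⟩ := Int.eq_ofNat_of_zero_le h0
    refine (parityAux n h' ?_).symm
    convert h using 1
    push_cast at hd; linarith
  · obtain ⟨n, hn⟩ := Int.eq_ofNat_of_zero_le (neg_nonneg.2 h0)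
    refine parityAux n h ?_
    convert h' using 1
    push_cast at hd; rw [← hn]; linarith

theorem lemP {γ : ℝ → ℂ} (hs : ContDiff ℝ (⊤ : ℕ∞) γ) (hp : Function.Periodic γ 1)
    (hi : ∀ t, deriv γ t ≠ 0) {θ r : ℝ → ℝ} (hθ : Continuous θ) (hr : ∀ t, 0 ≤ r t)
    (hd : ∀ t, deriv γ t = r t * Complex.exp (θ t * Complex.I)) {m : ℤ}
    (hm : θ 1 - θ 0 = 2 * Real.pi * m) : PW γ m := by
  have hrn : ∀ t, r t = ‖deriv γ t‖ := by
    intro t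
    rw [hd t, norm_mul, Complex.norm_exp_ofReal_mul_I, mul_one, Complex.norm_real, Real.norm_eq_abs,
      abs_of_nonneg (hr t)]
  let g := deriv γ
  have hg : ContDiff ℝ (⊤ : ℕ∞) g := (contDiff_infty_iff_deriv.1 hs).2
  have hgp : ∀ t, g (t + 1) = g t := by
    intro t
    have : (fun x => γ (x + 1)) = γ := by funext x; exact hp x
    have h2 := deriv_comp_add_const γ 1 t
    rw [this] at h2
    exact h2.symm
  let φ : ℝ → ℂ := fun t => (Real.log ‖g t‖ : ℝ) + θ t * Complex.I
  have hφc : Continuous φ := by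
    refine (Complex.continuous_ofReal.comp ?_).add
      ((Complex.continuous_ofReal.comp hθ).mul continuous_const)
    exact hg.continuous.norm.log (fun t => norm_ne_zero_iff.2 (hi t))
  have hφe : ∀ t, Complex.exp (φ t) = g t := by
    intro t
    simp only [φ]
    rw [Complex.exp_add, ← Complex.ofReal_exp, Real.exp_log (norm_pos_iff.2 (hi t)), ← hrn, ← hd]
  have hq : ContDiff ℝ (⊤ : ℕ∞) fun t => deriv g t / g t := by
    simp only [div_eq_mul_inv]
    exact (contDiff_infty_iff_deriv.1 hg).2.mul (hg.inv hi)
  let F : ℝ → ℂ := fun t => φ 0 + ∫ x in (0:ℝ)..t, deriv g x / g x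
  have hF : ∀ t, HasDerivAt F (deriv g t / g t) t := by
    intro t
    exact (intervalIntegral.integral_hasDerivAt_right (hq.continuous.intervalIntegrable _ _)
      (hq.continuous.stronglyMeasurableAtFilter _ _) hq.continuous.continuousAt).const_add _
  have hFs : ContDiff ℝ (⊤ : ℕ∞) F := by
    rw [contDiff_infty_iff_deriv]
    refine ⟨fun t => (hF t).differentiableAt, ?_⟩
    have : deriv F = fun t => deriv g t / g t := by funext t; exact (hF t).deriv
    rw [this]; exact hq
  have hconst : ∀ t, g t * Complex.exp (-F t) = g 0 * Complex.exp (-F 0) := by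
    have hD : ∀ t, HasDerivAt (fun t => g t * Complex.exp (-F t)) 0 t := by
      intro t
      have h1 := ((hg.differentiable (by simp)) t).hasDerivAt
      refine (h1.mul (hF t).neg.cexp).congr_deriv ?_
      have := hi t
      change g t ≠ 0 at this
      field_simp
      ring
    intro t
    exact is_const_of_deriv_eq_zero (fun t => (hD t).differentiableAt) (fun t => (hD t).deriv) t 0
  have hF0 : F 0 = φ 0 := by simp [F]
  have hsame : ∀ t, φ t = F t := by
    have key := exp_const (f := fun t => φ t - F t) (hφc.sub hFs.continuous) (by
      intro t
      simp only [sub_eq_add_neg, Complex.exp_add, hφe]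
      exact hconst t)
    intro t
    have := key t
    simp only [hF0, sub_self] at this
    exact sub_eq_zero.1 this
  have hφs : ContDiff ℝ (⊤ : ℕ∞) φ := by
    have : φ = F := funext hsame
    rw [this]; exact hFs
  refine ⟨hp, φ, hφs, ?_, ?_⟩
  · intro t
    rw [hφe]
    exact ((hs.differentiable (by simp)) t).hasDerivAt
  · have key := exp_const (f := fun t => φ (t + 1) - φ t)
      ((hφc.comp (continuous_id.add continuous_const)).sub hφc) (by
      intro t
      simp only [Complex.exp_sub, hφe, hgp]
      rw [div_self (hi t), div_self (hi 0)])
    intro t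
    have := key t
    rw [sub_eq_iff_eq_add] at this
    rw [this, zero_add, add_comm]
    congr 1
    have h10 : g 1 = g 0 := by simpa using hgp 0
    simp only [φ, h10]
    have hm' : θ 1 = θ 0 + 2 * Real.pi * m := by linarith
    rw [hm']
    push_cast
    ring

open SphericalCurve in
theorem stereo_right {w : E3} (hw : ‖w‖ = 1) (h2 : w 2 ≠ 1) :
    stereoInv ((((w 0 : ℝ) : ℂ) + ((w 1 : ℝ) : ℂ) * Complex.I) / ((1 - w 2 : ℝ) : ℂ)) = w := by
  have hsum : w 0 ^ 2 + w 1 ^ 2 + w 2 ^ 2 = 1 := by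
    have := EuclideanSpace.norm_sq_eq w
    rw [hw, Fin.sum_univ_three] at this
    simp at this
    exact this.symm
  have hne : 1 - w 2 ≠ 0 := fun h => h2 (by linarith)
  set z := (((w 0 : ℝ) : ℂ) + ((w 1 : ℝ) : ℂ) * Complex.I) / ((1 - w 2 : ℝ) : ℂ) with hz
  have hre : z.re = w 0 / (1 - w 2) := by
    rw [hz, Complex.div_ofReal_re]; simp
  have him : z.im = w 1 / (1 - w 2) := by
    rw [hz, Complex.div_ofReal_im]; simp
  have hn : Complex.normSq z + 1 = 2 / (1 - w 2) := by
    rw [Complex.normSq_apply, hre, him]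
    field_simp
    nlinarith
  have hn' : Complex.normSq z - 1 = 2 / (1 - w 2) - 2 := by linarith
  obtain ⟨a0, a1, a2⟩ := stereoInv_apply z
  apply E3_ext
  · rw [a0, hn, hre]; field_simp
  · rw [a1, hn, him]; field_simp
  · rw [a2, hn, hn']; field_simp; ring

def gam (f : ℝ → E3) (x y v : E3) (t : ℝ) : ℂ :=
  (((inner ℝ x (f t) : ℝ) : ℂ) + ((inner ℝ y (f t) : ℝ) : ℂ) * Complex.I) /
    ((1 - inner ℝ v (f t) : ℝ) : ℂ)

theorem gam_smooth {f : ℝ → E3} {x y v : E3} (hs : ContDiff ℝ (⊤ : ℕ∞) f)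
    (hne : ∀ t, inner ℝ v (f t) ≠ (1 : ℝ)) : ContDiff ℝ (⊤ : ℕ∞) (gam f x y v) := by
  have h : ∀ z : E3, ContDiff ℝ (⊤ : ℕ∞) fun t => ((inner ℝ z (f t) : ℝ) : ℂ) := by
    intro z
    exact Complex.ofRealCLM.contDiff.comp (contDiff_const.inner ℝ hs)
  have h1 : ContDiff ℝ (⊤ : ℕ∞) fun t => ((1 - inner ℝ v (f t) : ℝ) : ℂ) :=
    Complex.ofRealCLM.contDiff.comp (contDiff_const.sub (contDiff_const.inner ℝ hs))
  have e : gam f x y v = fun t => (((inner ℝ x (f t) : ℝ) : ℂ) +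
      ((inner ℝ y (f t) : ℝ) : ℂ) * Complex.I) * ((1 - inner ℝ v (f t) : ℝ) : ℂ)⁻¹ := by
    funext t
    simp only [gam, div_eq_mul_inv]
  rw [e]
  refine ((h x).add ((h y).mul contDiff_const)).mul (h1.inv ?_)
  intro t h0
  have h0' : (1 - inner ℝ v (f t) : ℝ) = 0 := by exact_mod_cast h0
  exact hne t (by linarith)

open SphericalCurve in
theorem coreA {f : ℝ → E3} (hn : ∀ t, ‖f t‖ = 1) (hp : Function.Periodic f 1)
    (hs : ContDiff ℝ (⊤ : ℕ∞) f) (hi : ∀ t, deriv f t ≠ 0) {x y v : E3}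
    (hx : ‖x‖ = 1) (hy : ‖y‖ = 1) (hxy : inner ℝ x y = 0) (hv : toQ v = toQ x * toQ y)
    (hne : ∀ t, inner ℝ v (f t) ≠ (1 : ℝ)) :
    SR f (fun t => stereoInv (gam f x y v t)) ∧ ∀ t, deriv (gam f x y v) t ≠ 0 := by
  obtain ⟨q, hq, h1, h2⟩ := intertwine (toQ_sq hx) (toQ_sq hy) (toQ_anti' hxy)
  have hk : q * qk = toQ v * q := by
    have : qk = qi * qj := by ext <;> simp
    rw [this, hv, ← mul_assoc, h1, mul_assoc, h2, mul_assoc]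
  have key : ∀ (z u : E3), q * toQ u = toQ z * q → ∀ t, inner ℝ z (f t) = inner ℝ u (Rot q⁻¹ (f t)) := by
    intro z u h t
    have hz : z = Rot q u := by
      rw [Rot_apply, h, mul_assoc, mul_inv_cancel₀ hq, mul_one, ofQ_toQ]
    conv_lhs => rw [hz, ← Rot_inv hq (f t)]
    rw [inner_Rot hq]
  have hq' := inv_ne_zero hq
  have hqi : toQ (ofQ qi) = qi := toQ_ofQ rfl
  have hqj : toQ (ofQ qj) = qj := toQ_ofQ rfl
  have hqk : toQ (ofQ qk) = qk := toQ_ofQ rfl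
  have k0 : ∀ t, inner ℝ x (f t) = Rot q⁻¹ (f t) 0 := by
    intro t; rw [key x (ofQ qi) (by rw [hqi, h1]), inner_E3]; simp
  have k1 : ∀ t, inner ℝ y (f t) = Rot q⁻¹ (f t) 1 := by
    intro t; rw [key y (ofQ qj) (by rw [hqj, h2]), inner_E3]; simp
  have k2 : ∀ t, inner ℝ v (f t) = Rot q⁻¹ (f t) 2 := by
    intro t; rw [key v (ofQ qk) (by rw [hqk, hk]), inner_E3]; simp
  have hw : (fun t => stereoInv (gam f x y v t)) = fun t => Rot q⁻¹ (f t) := by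
    funext t
    simp only [gam, k0, k1, k2]
    exact stereo_right (by rw [norm_Rot hq', hn]) (by rw [← k2]; exact hne t)
  refine ⟨?_, ?_⟩
  · rw [hw]; exact rotSR hn hp hs hi hq'
  · intro t h0
    have hd : HasDerivAt (fun t => Rot q⁻¹ (f t)) (Rot q⁻¹ (deriv f t)) t :=
      (Rot q⁻¹).hasFDerivAt.comp_hasDerivAt t ((hs.differentiable (by simp)) t).hasDerivAt
    have hg := (((gam_smooth (x := x) (y := y) hs hne).differentiable (by simp)) t).hasDerivAt
    rw [h0] at hg
    have h3 := ((contDiff_stereoInv.differentiable (by simp)) (gam f x y v t)).hasFDerivAt.comp_hasDerivAt t hg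
    have h4 : HasDerivAt (fun t => Rot q⁻¹ (f t)) (0 : E3) t := by
      rw [← hw]
      rw [map_zero] at h3
      exact h3
    have h5 := hd.unique h4
    have h6 := norm_Rot hq' (deriv f t)
    rw [h5, norm_zero] at h6
    exact hi t (norm_eq_zero.1 h6.symm)

theorem proj_frame (c : SphericalCurve) (v : Metric.sphere (0 : EuclideanSpace ℝ (Fin 3)) 1) :
    ∃ e : Fin 2 → E3, (∀ i, ‖e i‖ = 1) ∧ inner ℝ (e 0) (e 1) = (0 : ℝ) ∧
      (∀ i, inner ℝ (e i) (v : E3) = (0 : ℝ)) ∧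
      ∀ t i, c.proj v t i = 2 / (1 - inner ℝ (v : E3) (c.toFun t)) * inner ℝ (e i) (c.toFun t) := by
  have : Fact (Module.finrank ℝ (EuclideanSpace ℝ (Fin 3)) = 2 + 1) := ⟨by simp⟩
  let b := OrthonormalBasis.fromOrthogonalSpanSingleton (𝕜 := ℝ) 2 (ne_zero_of_mem_unit_sphere v)
  refine ⟨fun i => (b i : E3), ?_, ?_, ?_, ?_⟩
  · intro i
    exact b.orthonormal.1 i
  · exact b.orthonormal.2 (by decide : (0 : Fin 2) ≠ 1)
  · intro i
    exact Submodule.mem_orthogonal_singleton_iff_inner_left.1 (b i).2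
  · intro t i
    have : c.proj v t = b.repr (stereographic (norm_eq_of_mem_sphere v) (c.pt t)) := rfl
    rw [this, stereographic_apply, map_smul, PiLp.smul_apply, OrthonormalBasis.repr_apply_apply,
      smul_eq_mul]
    congr 1
    exact Submodule.inner_orthogonalProjectionOnto_eq_of_mem_left (b i) (c.toFun t)

open SphericalCurve in
theorem lemA {c : SphericalCurve} {ω : ZMod 2} (h : c.HasWhitney ω) :
    ∃ γ m, PW γ m ∧ (m : ZMod 2) = ω ∧ SR c.toFun (fun t => stereoInv (γ t)) := by
  obtain ⟨v, hv, m, θ, hθ, hd, hm, rfl⟩ := h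
  obtain ⟨e, he, he01, hev, hproj⟩ := proj_frame c v
  have hvn : ‖(v : E3)‖ = 1 := norm_eq_of_mem_sphere v
  have hne : ∀ t, inner ℝ (v : E3) (c.toFun t) ≠ (1 : ℝ) := by
    intro t h
    rw [inner_eq_one_iff_of_norm_eq_one hvn (c.norm_one t)] at h
    exact hv t h.symm
  let g := gam c.toFun (e 0) (e 1) v
  have hgs : ContDiff ℝ (⊤ : ℕ∞) g := gam_smooth c.smooth hne
  let M : ℂ →L[ℝ] EuclideanSpace ℝ (Fin 2) :=
    (2 : ℝ) • (Complex.orthonormalBasisOneI.repr.toContinuousLinearEquiv : ℂ →L[ℝ] EuclideanSpace ℝ (Fin 2))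
  have hM : ∀ z i, M z i = 2 * ![z.re, z.im] i := by
    intro z i
    have := Complex.orthonormalBasisOneI_repr_apply z
    simp [M, this]
  have hpM : c.proj v = fun t => M (g t) := by
    funext t
    have hre : (g t).re = inner ℝ (e 0) (c.toFun t) / (1 - inner ℝ (v : E3) (c.toFun t)) := by
      simp only [g, gam]
      rw [Complex.div_ofReal_re]; simp
    have him : (g t).im = inner ℝ (e 1) (c.toFun t) / (1 - inner ℝ (v : E3) (c.toFun t)) := by
      simp only [g, gam]
      rw [Complex.div_ofReal_im]; simp
    ext i
    rw [hproj, hM]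
    fin_cases i
    · simp [hre]; ring
    · simp [him]; ring
  have hder : ∀ t, deriv (c.proj v) t = M (deriv g t) := by
    intro t
    rw [hpM]
    exact (M.hasFDerivAt.comp_hasDerivAt t ((hgs.differentiable (by simp)) t).hasDerivAt).deriv
  let r : ℝ → ℝ := fun t => ‖deriv (c.proj v) t‖ / 2
  have hr : ∀ t, 0 ≤ r t := fun t => by positivity
  have hg : ∀ t, deriv g t = r t * Complex.exp (θ t * Complex.I) := by
    intro t
    have h1 := hd t
    rw [hder t] at h1
    have a0 := congrArg (fun z : EuclideanSpace ℝ (Fin 2) => z 0) h1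
    have a1 := congrArg (fun z : EuclideanSpace ℝ (Fin 2) => z 1) h1
    simp [hM] at a0 a1
    rw [← hder t] at a0 a1
    apply Complex.ext
    · rw [Complex.re_ofReal_mul, Complex.exp_ofReal_mul_I_re]
      simp only [r]; linarith
    · rw [Complex.im_ofReal_mul, Complex.exp_ofReal_mul_I_im]
      simp only [r]; linarith
  have hper : ∀ x y : E3, Function.Periodic (gam c.toFun x y v) 1 := by
    intro x y t
    simp only [gam, c.periodic t]
  rcases frame_sign (he 0) (he 1) hvn he01 (hev 0) (hev 1) with hs | hs
  · obtain ⟨hS, hi⟩ := coreA c.norm_one c.periodic c.smooth c.immersion (he 0) (he 1) he01 hs hne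
    exact ⟨g, m, lemP hgs (hper _ _) hi hθ hr hg hm, rfl, hS⟩
  · obtain ⟨hS, hi⟩ := coreA (y := -e 1) c.norm_one c.periodic c.smooth c.immersion (he 0)
      (by rw [norm_neg, he 1]) (by rw [inner_neg_right, he01, neg_zero])
      (by rw [hs, map_neg, mul_neg]) hne
    refine ⟨_, -m, lemP (gam_smooth c.smooth hne) (hper _ _) hi (θ := fun t => - θ t) hθ.neg hr ?_ ?_, ?_, hS⟩
    · intro t
      have hconj : gam c.toFun (e 0) (-e 1) v = fun t => Complex.conjCLE (g t) := by
        funext t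
        simp [g, gam, inner_neg_left]
      have := (Complex.conjCLE.toContinuousLinearMap.hasFDerivAt.comp_hasDerivAt t
        ((hgs.differentiable (by simp)) t).hasDerivAt).deriv
      rw [hconj]
      refine this.trans ?_
      rw [hg t]
      simp [← Complex.exp_conj]
    · push_cast; linarith
    · push_cast
      exact ZMod.neg_eq_self_mod_two _

def FR (p u : QQ) : Prop := p * p = -1 ∧ u * u = -1 ∧ p * u = -(u * p)

def Lift (p u : ℝ → QQ) (σ : ℝ) : Prop := ∃ q : ℝ → QQ, Continuous q ∧ (∀ t, q t ≠ 0) ∧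
  (∀ t, q t * qk = p t * q t) ∧ (∀ t, q t * qi = u t * q t) ∧ q 1 = σ • q 0

def TQ (p u p' u' : QQ) : QQ := 1 - p' * p - u' * u - (p' * u') * (p * u)

theorem TQ_p {p u p' u' : QQ} (h : FR p u) (h' : FR p' u') :
    TQ p u p' u' * p = p' * TQ p u p' u' := by
  obtain ⟨h1, h2, h3⟩ := h
  obtain ⟨g1, g2, g3⟩ := h'
  have k1 : u * p = -(p * u) := by rw [h3, neg_neg]
  have k2 : p * u * p = u := by rw [mul_assoc, k1, mul_neg, ← mul_assoc, h1]; simp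
  have k3 : p' * (p' * u') = - u' := by rw [← mul_assoc, g1]; simp
  have e1 : TQ p u p' u' * p = p + p' + u' * (p * u) - p' * u' * u := by
    have : TQ p u p' u' * p = p - p' * (p * p) - u' * (u * p) - (p' * u') * (p * u * p) := by
      unfold TQ; noncomm_ring
    rw [this, h1, k1, k2]; noncomm_ring
  have e2 : p' * TQ p u p' u' = p + p' + u' * (p * u) - p' * u' * u := by
    have : p' * TQ p u p' u' = p' - (p' * p') * p - p' * u' * u - (p' * (p' * u')) * (p * u) := by
      unfold TQ; noncomm_ring
    rw [this, g1, k3]; noncomm_ring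
  rw [e1, e2]

theorem TQ_u {p u p' u' : QQ} (h : FR p u) (h' : FR p' u') :
    TQ p u p' u' * u = u' * TQ p u p' u' := by
  obtain ⟨h1, h2, h3⟩ := h
  obtain ⟨g1, g2, g3⟩ := h'
  have k1 : u' * p' = -(p' * u') := by rw [g3, neg_neg]
  have k2 : p * u * u = -p := by rw [mul_assoc, h2]; simp
  have k3 : u' * (p' * u') = p' := by rw [← mul_assoc, k1, neg_mul, mul_assoc, g2]; simp
  have e1 : TQ p u p' u' * u = u + u' - p' * (p * u) + p' * u' * p := by
    have : TQ p u p' u' * u = u - p' * (p * u) - u' * (u * u) - (p' * u') * (p * u * u) := by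
      unfold TQ; noncomm_ring
    rw [this, h2, k2]; noncomm_ring
  have e2 : u' * TQ p u p' u' = u + u' - p' * (p * u) + p' * u' * p := by
    have : u' * TQ p u p' u' = u' - (u' * p') * p - (u' * u') * u - (u' * (p' * u')) * (p * u) := by
      unfold TQ; noncomm_ring
    rw [this, g2, k1, k3]; noncomm_ring
  rw [e1, e2]

theorem TQ_self {p u : QQ} (h : FR p u) : TQ p u p u ≠ 0 := by
  obtain ⟨h1, h2, h3⟩ := h
  have k1 : u * p = -(p * u) := by rw [h3, neg_neg]
  have : p * u * (p * u) = -1 := by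
    rw [mul_assoc, ← mul_assoc u, k1, neg_mul, mul_assoc p u u, h2, mul_neg, mul_neg, mul_neg, mul_one, h1]
    simp
  have h4 : TQ p u p u = ((4 : ℝ) : QQ) := by
    unfold TQ
    rw [h1, h2, this]
    ext <;> simp
    norm_num
  rw [h4]
  intro h
  have := congrArg QuaternionAlgebra.re h
  simp at this

theorem lift_transport {p u p' u' : ℝ → QQ} {σ : ℝ} (h : Lift p u σ)
    (hf : ∀ t, FR (p t) (u t)) (hf' : ∀ t, FR (p' t) (u' t))
    (hc : Continuous fun t => TQ (p t) (u t) (p' t) (u' t))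
    (hne : ∀ t, TQ (p t) (u t) (p' t) (u' t) ≠ 0)
    (h1 : TQ (p 1) (u 1) (p' 1) (u' 1) = TQ (p 0) (u 0) (p' 0) (u' 0)) : Lift p' u' σ := by
  obtain ⟨q, hq, hq0, hk, hi, hσ⟩ := h
  refine ⟨fun t => TQ (p t) (u t) (p' t) (u' t) * q t, hc.mul hq, fun t => mul_ne_zero (hne t) (hq0 t),
    ?_, ?_, ?_⟩
  · intro t
    rw [mul_assoc, hk, ← mul_assoc, TQ_p (hf t) (hf' t), mul_assoc]
  · intro t
    rw [mul_assoc, hi, ← mul_assoc, TQ_u (hf t) (hf' t), mul_assoc]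
  · simp only [h1, hσ, mul_smul_comm]

theorem lift_unique_s8 {p u : ℝ → QQ} {σ σ' : ℝ} (h : Lift p u σ) (h' : Lift p u σ') : 0 ≤ σ * σ' := by
  obtain ⟨q, hq, hq0, hk, hi, hσ⟩ := h
  obtain ⟨q', hq', hq0', hk', hi', hσ'⟩ := h'
  have key : ∀ t, ∀ a b : QQ, q t * a = b * q t → q' t * a = b * q' t →
      ((q' t)⁻¹ * q t) * a = a * ((q' t)⁻¹ * q t) := by
    intro t a b h h'
    have h3 : a * (q' t)⁻¹ = (q' t)⁻¹ * b := by
      rw [eq_inv_mul_iff_mul_eq₀ (hq0' t), ← mul_assoc, h', mul_assoc, mul_inv_cancel₀ (hq0' t), mul_one]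
    rw [mul_assoc, h, ← mul_assoc, ← h3, mul_assoc]
  have hkk : qk * qk = -1 := by ext <;> simp
  have hii : qi * qi = -1 := by ext <;> simp
  have hki : qk * qi = -(qi * qk) := by ext <;> simp
  let r : ℝ → ℝ := fun t => ((q' t)⁻¹ * q t).re
  have hr : ∀ t, q t = r t • q' t := by
    intro t
    obtain ⟨x, hx⟩ := comm_real hkk hii hki (key t _ _ (hk t) (hk' t)) (key t _ _ (hi t) (hi' t))
    have h1 : r t = x := by simp only [r, hx]; simp
    rw [inv_mul_eq_iff_eq_mul₀ (hq0' t)] at hx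
    rw [hx, h1, ← Quaternion.coe_commutes, Quaternion.coe_mul_eq_smul]
  have hrc : Continuous r :=
    Quaternion.continuous_re.comp ((hq'.inv₀ hq0').mul hq)
  have hr0 : ∀ t, r t ≠ 0 := by
    intro t h
    have := hr t
    rw [h, zero_smul] at this
    exact hq0 t this
  have hpos : 0 < r 0 * r 1 := by
    by_contra hcon
    push Not at hcon
    have h0 : (0 : ℝ) ∈ uIcc (r 0) (r 1) := by
      rw [mem_uIcc]
      rcases le_total 0 (r 0) with h | h
      · right
        have : 0 < r 0 := lt_of_le_of_ne h (hr0 0).symm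
        exact ⟨by nlinarith, h⟩
      · left
        have : r 0 < 0 := lt_of_le_of_ne h (hr0 0)
        exact ⟨h, by nlinarith⟩
    obtain ⟨t, -, ht⟩ := intermediate_value_uIcc hrc.continuousOn h0
    exact hr0 t ht
  have e : (r 1 * σ') • q' 0 = (σ * r 0) • q' 0 := by
    rw [mul_smul, mul_smul, ← hσ', ← hr, ← hr, hσ]
  have e2 : r 1 * σ' = σ * r 0 := smul_left_injective ℝ (hq0' 0) e
  have : σ * σ' * (r 0 * r 1) = (σ * r 0) ^ 2 := by
    calc _ = (σ * r 0) * (r 1 * σ') := by ring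
      _ = _ := by rw [e2]; ring
  have h2 : 0 ≤ σ * σ' * (r 0 * r 1) := by rw [this]; positivity
  exact nonneg_of_mul_nonneg_left h2 hpos

/-- Unit tangent, as a quaternion. -/
def tp (f : ℝ → E3) (t : ℝ) : QQ := - toQ (f t)
def tu (f : ℝ → E3) (t : ℝ) : QQ := - toQ (‖deriv f t‖⁻¹ • deriv f t)

theorem FR_curve {f : ℝ → E3} (hn : ∀ t, ‖f t‖ = 1) (hs : ContDiff ℝ (⊤ : ℕ∞) f)
    (hi : ∀ t, deriv f t ≠ 0) (t : ℝ) : FR (tp f t) (tu f t) := by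
  have hN : ‖deriv f t‖ ≠ 0 := norm_ne_zero_iff.2 (hi t)
  have h1 := toQ_sq (hn t)
  have h2 : toQ (‖deriv f t‖⁻¹ • deriv f t) * toQ (‖deriv f t‖⁻¹ • deriv f t) = -1 := by
    apply toQ_sq
    rw [norm_smul, norm_inv, norm_norm, inv_mul_cancel₀ hN]
  have hin : inner ℝ (f t) (deriv f t) = (0 : ℝ) := by
    have hd := ((hs.differentiable (by simp)) t).hasDerivAt
    have h3 := hd.inner ℝ hd
    have h4 : (fun t => inner ℝ (f t) (f t)) = fun _ : ℝ => (1 : ℝ) := by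
      funext t; rw [real_inner_self_eq_norm_sq, hn]; norm_num
    rw [h4] at h3
    have h5 := h3.unique (hasDerivAt_const t (1 : ℝ))
    have h6 := real_inner_comm (f t) (deriv f t)
    linarith
  have h3 : toQ (f t) * toQ (‖deriv f t‖⁻¹ • deriv f t) = -(toQ (‖deriv f t‖⁻¹ • deriv f t) * toQ (f t)) := by
    apply toQ_anti'
    rw [inner_smul_right, hin, mul_zero]
  refine ⟨?_, ?_, ?_⟩
  · simp only [tp, neg_mul_neg, h1]
  · simp only [tu, neg_mul_neg, h2]
  · simp only [tp, tu, neg_mul_neg, h3]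

theorem lift_family {P U : ℝ → ℝ → QQ} (hF : ∀ s t, FR (P s t) (U s t))
    (cp : Continuous fun x : ℝ × ℝ => P x.1 x.2) (cu : Continuous fun x : ℝ × ℝ => U x.1 x.2)
    (a1 : ∀ s t, P s (t + 1) = P s t) (a2 : ∀ s t, U s (t + 1) = U s t) {σ : ℝ}
    (hL : Lift (P 0) (U 0) σ) : Lift (P 1) (U 1) σ := by
  obtain ⟨D, hD⟩ : ∃ D : ℝ → ℝ → ℝ → QQ, ∀ s s' t, D s s' t = TQ (P s t) (U s t) (P s' t) (U s' t) :=
    ⟨_, fun _ _ _ => rfl⟩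
  have cD : Continuous fun x : ℝ × ℝ × ℝ => D x.1 x.2.1 x.2.2 := by
    have c1 : Continuous fun x : ℝ × ℝ × ℝ => (x.1, x.2.2) := by fun_prop
    have c2 : Continuous fun x : ℝ × ℝ × ℝ => (x.2.1, x.2.2) := by fun_prop
    have p1 : Continuous fun x : ℝ × ℝ × ℝ => P x.1 x.2.2 := cp.comp c1
    have p2 : Continuous fun x : ℝ × ℝ × ℝ => P x.2.1 x.2.2 := cp.comp c2
    have u1 : Continuous fun x : ℝ × ℝ × ℝ => U x.1 x.2.2 := cu.comp c1
    have u2 : Continuous fun x : ℝ × ℝ × ℝ => U x.2.1 x.2.2 := cu.comp c2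
    simp only [hD, TQ]
    exact ((continuous_const.sub (p2.mul p1)).sub (u2.mul u1)).sub ((p2.mul u2).mul (p1.mul u1))
  have hper : ∀ s s', Function.Periodic (D s s') 1 := by
    intro s s' t
    simp only [hD, a1, a2]
  have hself : ∀ s t, D s s t ≠ 0 := by
    intro s t
    rw [hD]; exact TQ_self (hF s t)
  let A : Set ℝ := {s | Lift (P s) (U s) σ}
  have trans : ∀ s s', (∀ t ∈ Icc (0:ℝ) 1, D s s' t ≠ 0) → s ∈ A → s' ∈ A := by
    intro s s' h0 hsA
    refine lift_transport hsA (hF s) (hF s') ?_ ?_ ?_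
    · simp only [← hD]
      exact cD.comp (by fun_prop : Continuous fun t : ℝ => (s, s', t))
    · intro t
      obtain ⟨y, hy, hy2⟩ := (hper s s').exists_mem_Ico₀ one_pos t
      rw [← hD, hy2]
      exact h0 y ⟨hy.1, hy.2.le⟩
    · have := hper s s' 0
      rw [zero_add] at this
      rw [← hD, ← hD, this]
  have ev1 : ∀ s, ∀ᶠ s' in nhds s, ∀ t ∈ Icc (0:ℝ) 1, D s s' t ≠ 0 := by
    intro s
    apply isCompact_Icc.eventually_forall_of_forall_eventually
    intro t _
    have c : Continuous fun z : ℝ × ℝ => D s z.1 z.2 :=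
      cD.comp (by fun_prop : Continuous fun z : ℝ × ℝ => (s, z.1, z.2))
    exact c.continuousAt.eventually_ne (hself s t)
  have ev2 : ∀ s, ∀ᶠ s' in nhds s, ∀ t ∈ Icc (0:ℝ) 1, D s' s t ≠ 0 := by
    intro s
    apply isCompact_Icc.eventually_forall_of_forall_eventually
    intro t _
    have c : Continuous fun z : ℝ × ℝ => D z.1 s z.2 :=
      cD.comp (by fun_prop : Continuous fun z : ℝ × ℝ => (z.1, s, z.2))
    exact c.continuousAt.eventually_ne (hself s t)
  have hopen : IsOpen A := by
    rw [isOpen_iff_mem_nhds]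
    intro s hsA
    filter_upwards [ev1 s] with s' h'
    exact trans s s' h' hsA
  have hclosed : IsClosed A := by
    rw [← isOpen_compl_iff, isOpen_iff_mem_nhds]
    intro s hsA
    filter_upwards [ev2 s] with s' h' h''
    exact hsA (trans s' s h' h'')
  have huniv : A = univ := IsClopen.eq_univ ⟨hclosed, hopen⟩ ⟨0, hL⟩
  have : (1 : ℝ) ∈ A := by rw [huniv]; trivial
  exact this

theorem lift_homotopy {f g : ℝ → E3} (h : SR f g) {σ : ℝ} (hL : Lift (tp f) (tu f) σ) :
    Lift (tp g) (tu g) σ := by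
  obtain ⟨H, hc, hdc, hn, hp, hs, hi, rfl, rfl⟩ := h
  refine lift_family (P := fun s t => tp (H s) t) (U := fun s t => tu (H s) t)
    (fun s t => FR_curve (hn s) (hs s) (hi s) t) (toQ.continuous.comp hc).neg
    (toQ.continuous.comp ((hdc.norm.inv₀ (fun x => norm_ne_zero_iff.2 (hi _ _))).smul hdc)).neg
    ?_ ?_ hL
  · intro s t
    simp only [tp, hp s t]
  · intro s t
    have : deriv (H s) (t + 1) = deriv (H s) t := by
      have e : (fun x => H s (x + 1)) = H s := by funext x; exact hp s x
      have h2 := deriv_comp_add_const (H s) 1 t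
      rw [e] at h2
      exact h2.symm
    simp only [tu, this]

open SphericalCurve in
theorem stereo_deriv {γ : ℝ → ℂ} {d : ℂ} {t : ℝ} (h : HasDerivAt γ d t) :
    toQ (deriv (fun t => stereoInv (γ t)) t) * (qk - (γ t).re • qi - (γ t).im • qj) =
      (-(2 / (Complex.normSq (γ t) + 1))) •
        ((qk - (γ t).re • qi - (γ t).im • qj) * (d.re • qi + d.im • qj)) := by
  have hD : HasDerivAt (fun t => stereoInv (γ t)) (deriv (fun t => stereoInv (γ t)) t) t := by
    have h3 := ((contDiff_stereoInv.differentiable (by simp)) (γ t)).hasFDerivAt.comp_hasDerivAt t h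
    exact (h3.differentiableAt).hasDerivAt
  have hre : HasDerivAt (fun t => (γ t).re) d.re t := Complex.reCLM.hasFDerivAt.comp_hasDerivAt t h
  have him : HasDerivAt (fun t => (γ t).im) d.im t := Complex.imCLM.hasFDerivAt.comp_hasDerivAt t h
  have hN : 0 < (γ t).re * (γ t).re + (γ t).im * (γ t).im + 1 := by
    nlinarith [mul_self_nonneg (γ t).re, mul_self_nonneg (γ t).im]
  have hsq := ((hre.mul hre).add (him.mul him))
  have d0 := ((hre.const_mul 2).div (hsq.add_const 1) hN.ne').unique
    ((hasDerivAt_coord hD 0).congr_of_eventuallyEq (Filter.Eventually.of_forall fun x => by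
      simp [stereoInv_apply, Complex.normSq_apply]))
  have d1 := ((him.const_mul 2).div (hsq.add_const 1) hN.ne').unique
    ((hasDerivAt_coord hD 1).congr_of_eventuallyEq (Filter.Eventually.of_forall fun x => by
      simp [stereoInv_apply, Complex.normSq_apply]))
  have d2 := ((hsq.sub_const 1).div (hsq.add_const 1) hN.ne').unique
    ((hasDerivAt_coord hD 2).congr_of_eventuallyEq (Filter.Eventually.of_forall fun x => by
      simp [stereoInv_apply, Complex.normSq_apply]))
  simp only [Pi.add_apply, Pi.mul_apply] at d0 d1 d2
  set D := deriv (fun t => stereoInv (γ t)) t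
  rw [Complex.normSq_apply]
  set x := (γ t).re
  set y := (γ t).im
  ext <;> simp [← d0, ← d1, ← d2] <;> field_simp <;> ring

open SphericalCurve in
theorem stereo_pos (z : ℂ) : (qk - z.re • qi - z.im • qj) * qk =
    - toQ (stereoInv z) * (qk - z.re • qi - z.im • qj) := by
  have h := nsq_pos z
  rw [Complex.normSq_apply] at h
  ext <;> simp [stereoInv_apply, Complex.normSq_apply] <;> field_simp <;> ring

open SphericalCurve in
theorem lift_PW {γ : ℝ → ℂ} {m : ℤ} (h : PW γ m) :
    Lift (tp fun t => stereoInv (γ t)) (tu fun t => stereoInv (γ t)) ((-1) ^ m) := by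
  have himm := h.sphere_imm
  have hsm := h.smooth.continuous
  obtain ⟨hp, φ, hφ, hd, hm⟩ := h
  let g : ℝ → QQ := fun t => qk - (γ t).re • qi - (γ t).im • qj
  let θ : ℝ → ℝ := fun t => (φ t).im
  have hθ : Continuous θ := Complex.continuous_im.comp hφ.continuous
  let e : ℝ → QQ := fun t => Real.cos (θ t / 2) • (1 : QQ) + Real.sin (θ t / 2) • qk
  have hg : Continuous g := by
    refine (continuous_const.sub ?_).sub ?_
    · exact (Complex.continuous_re.comp hsm).smul continuous_const
    · exact (Complex.continuous_im.comp hsm).smul continuous_const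
  have he : Continuous e := by
    refine Continuous.add ?_ ?_
    · exact (Real.continuous_cos.comp (hθ.div_const 2)).smul continuous_const
    · exact (Real.continuous_sin.comp (hθ.div_const 2)).smul continuous_const
  have hg0 : ∀ t, g t ≠ 0 := by
    intro t h
    have := congrArg QuaternionAlgebra.imK h
    simp [g] at this
  have he0 : ∀ t, e t ≠ 0 := by
    intro t h
    have h1 := congrArg QuaternionAlgebra.re h
    have h2 := congrArg QuaternionAlgebra.imK h
    simp [e] at h1 h2
    have := Real.sin_sq_add_cos_sq (θ t / 2)
    rw [h1, h2] at this
    norm_num at this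
  have hq0 : ∀ t, g t * e t ≠ 0 := fun t => mul_ne_zero (hg0 t) (he0 t)
  refine ⟨fun t => g t * e t, hg.mul he, hq0, ?_, ?_, ?_⟩
  · intro t
    have : e t * qk = qk * e t := by
      ext <;> simp [e]
    rw [mul_assoc, this, ← mul_assoc, stereo_pos]
    simp only [tp, g, mul_assoc]
  · intro t
    set D := deriv (fun t => stereoInv (γ t)) t with hD
    have h1 := stereo_deriv (hd t)
    rw [← hD] at h1
    change toQ D * g t = _ • (g t * _) at h1
    set ρ := Real.exp (φ t).re
    have hρ : 0 < ρ := Real.exp_pos _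
    have hN := nsq_pos (γ t)
    rw [Complex.exp_re, Complex.exp_im] at h1
    have h2 : ((ρ * Real.cos (φ t).im) • qi + (ρ * Real.sin (φ t).im) • qj) * e t
        = ρ • (e t * qi) := by
      have c1 : Real.cos (φ t).im = Real.cos (θ t / 2) ^ 2 - Real.sin (θ t / 2) ^ 2 := by
        rw [← Real.cos_two_mul']; congr 1; simp only [θ]; ring
      have c2 : Real.sin (φ t).im = 2 * Real.sin (θ t / 2) * Real.cos (θ t / 2) := by
        rw [← Real.sin_two_mul]; congr 1; simp only [θ]; ring
      have c3 := Real.sin_sq_add_cos_sq (θ t / 2)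
      rw [c1, c2]
      simp only [e]
      set C := Real.cos (θ t / 2)
      set S := Real.sin (θ t / 2)
      ext <;> simp
      · linear_combination (ρ * C) * c3
      · linear_combination (ρ * S) * c3
    set k : ℝ := 2 / (Complex.normSq (γ t) + 1) * ρ with hk
    have hkpos : 0 < k := by positivity
    have h3 : toQ D * (g t * e t) = (-k) • (g t * e t * qi) := by
      rw [← mul_assoc, h1, smul_mul_assoc, mul_assoc, h2, mul_smul_comm, smul_smul, ← mul_assoc, hk, neg_mul]
    have h4 : ‖D‖ = k := by
      have := congrArg norm h3
      have hqi1 : ‖qi‖ = 1 := by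
        have : ‖qi‖ * ‖qi‖ = 1 := by
          rw [← norm_mul, show qi * qi = -1 by ext <;> simp]; simp
        nlinarith [norm_nonneg qi]
      rw [norm_mul, norm_toQ, norm_smul, norm_mul _ qi, hqi1, mul_one, norm_neg, Real.norm_eq_abs,
        abs_of_pos hkpos] at this
      exact mul_right_cancel₀ (norm_ne_zero_iff.2 (hq0 t)) this
    simp only [tu]
    rw [← hD, h4, map_smul, neg_mul, smul_mul_assoc, h3, smul_smul, mul_neg, inv_mul_cancel₀ hkpos.ne']
    simp
  · have g1 : g 1 = g 0 := by
      have : γ 1 = γ 0 := by simpa using hp 0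
      simp only [g, this]
    have t1 : θ 1 / 2 = θ 0 / 2 + m * Real.pi := by
      have := congrArg Complex.im (hm 0)
      simp at this
      simp only [θ]
      rw [this]; ring
    have e1 : e 1 = ((-1 : ℝ) ^ m) • e 0 := by
      simp only [e]
      rw [t1, Real.cos_add_int_mul_pi, Real.sin_add_int_mul_pi, smul_add, mul_smul, mul_smul]
    simp only [g1, e1, mul_smul_comm]

open SphericalCurve in
theorem lemF {γ γ' : ℝ → ℂ} {m m' : ℤ} (h : PW γ m) (h' : PW γ' m')
    (hS : SR (fun t => stereoInv (γ t)) (fun t => stereoInv (γ' t))) :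
    (m : ZMod 2) = (m' : ZMod 2) := by
  have hu := lift_unique_s8 (lift_homotopy hS (lift_PW h)) (lift_PW h')
  have key : Even m ↔ Even m' := by
    rcases Int.even_or_odd m with a | a <;> rcases Int.even_or_odd m' with b | b
    · simp [a, b]
    · rw [a.neg_one_zpow, b.neg_one_zpow] at hu; norm_num at hu
    · rw [a.neg_one_zpow, b.neg_one_zpow] at hu; norm_num at hu
    · simp [a, b, Int.not_even_iff_odd.2 a, Int.not_even_iff_odd.2 b]
  rw [ZMod.intCast_eq_intCast_iff, Int.ModEq]
  rw [Int.even_iff, Int.even_iff] at key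
  push_cast
  omega

theorem main8 (c c' : SphericalCurve) (ω ω' : ZMod 2) (hω : c.HasWhitney ω)
    (hω' : c'.HasWhitney ω') : SphericalCurve.RegularlyHomotopic c c' ↔ ω = ω' := by
  obtain ⟨γ, m, hP, hm, hS⟩ := lemA hω
  obtain ⟨γ', m', hP', hm', hS'⟩ := lemA hω'
  constructor
  · intro h
    have h' : SR c.toFun c'.toFun := h
    rw [← hm, ← hm']
    exact lemF hP hP' ((hS.symm.trans h').trans hS')
  · intro h
    have : SR c.toFun c'.toFun := (hS.trans (paritySR hP hP' (by rw [hm, hm', h]))).trans hS'.symm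
    exact this

/-- Whitney's theorem, spherical case. Two stable spherical curves are
regularly homotopic if and only if they have the same Whitney number in `{0,1}`. -/
theorem statement8 (c c' : SphericalCurve) (hc : c.Stable) (hc' : c'.Stable)
    (ω ω' : ZMod 2) (hω : c.HasWhitney ω) (hω' : c'.HasWhitney ω') :
    SphericalCurve.RegularlyHomotopic c c' ↔ ω = ω' := by
  exact main8 c c' ω ω' hω hω'

end CurvePaper
end
end
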